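/- arXiv:2201.03656 — 14 statements merged into one kernel-verified Lean document; each statement's English description precedes it below -/
import Mathlib

section
/- Assume T ≥ n and persistency of excitation. Then V* = [X0·K_U 0]·Ker[Y·K_U Y·K0]; that is, V* is exactly the set of vectors X0·K_U·α over all pairs (α, β) satisfying Y·K_U·α + Y·K0·β = 0. -/
/-- The invariant subspace algorithm. -/
noncomputable def ISA {n m p : ℕ} (A : Matrix (Fin n) (Fin n) ℝ) (B : Matrix (Fin n) (Fin m) ℝ)
    (C : Matrix (Fin p) (Fin n) ℝ) : ℕ → Submodule ℝ (Fin n → ℝ)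
  | 0 => ⊤
  | k + 1 => LinearMap.ker C.mulVecLin ⊓
      (ISA A B C k ⊔ LinearMap.range B.mulVecLin).comap A.mulVecLin

section
variable {n m p : ℕ} (A : Matrix (Fin n) (Fin n) ℝ) (B : Matrix (Fin n) (Fin m) ℝ)
    (C : Matrix (Fin p) (Fin n) ℝ)

theorem ISA_succ_le (k : ℕ) : ISA A B C (k + 1) ≤ ISA A B C k := by
  induction k with
  | zero => exact le_top
  | succ k ih =>
    exact inf_le_inf_left _ (Submodule.comap_mono (sup_le_sup_right ih _))

theorem ISA_stable {k : ℕ} (h : ISA A B C k = ISA A B C (k + 1)) (j : ℕ) :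
    ISA A B C (k + j) = ISA A B C k := by
  induction j with
  | zero => rfl
  | succ j ih =>
    have : ISA A B C (k + (j + 1)) = ISA A B C (k + 1) := by
      rw [← add_assoc]
      simp only [ISA, ih]
    rw [this, h]

theorem ISA_dim (k : ℕ) (h : ∀ j < k, ISA A B C j ≠ ISA A B C (j + 1)) :
    Module.finrank ℝ (ISA A B C k) + k ≤ n := by
  induction k with
  | zero => simpa using Submodule.finrank_le (ISA A B C 0)
  | succ k ih =>
    have h1 := ih (fun j hj => h j (by omega))
    have h2 : ISA A B C (k + 1) < ISA A B C k :=
      lt_of_le_of_ne (ISA_succ_le A B C k) (h k (by omega)).symm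
    have := Submodule.finrank_lt_finrank_of_lt h2
    omega

theorem ISA_fix {T : ℕ} (hT : n ≤ T) : ISA A B C T = ISA A B C (T + 1) := by
  have : ∃ k ≤ n, ISA A B C k = ISA A B C (k + 1) := by
    by_contra hc
    push Not at hc
    have := ISA_dim A B C (n + 1) (fun j hj => hc j (by omega))
    omega
  obtain ⟨k, hk, h⟩ := this
  obtain ⟨d, rfl⟩ := Nat.exists_eq_add_of_le (hk.trans hT)
  rw [add_assoc, ISA_stable A B C h, ISA_stable A B C h]

theorem mem_ISA (k : ℕ) (v : Fin n → ℝ) : v ∈ ISA A B C k ↔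
    ∃ (z : ℕ → Fin n → ℝ) (w : ℕ → Fin m → ℝ), z 0 = v ∧
      (∀ t, z (t + 1) = A.mulVec (z t) + B.mulVec (w t)) ∧ ∀ t < k, C.mulVec (z t) = 0 := by
  induction k generalizing v with
  | zero =>
    simp only [ISA, Submodule.mem_top, true_iff]
    refine ⟨fun t => Nat.rec v (fun _ y => A.mulVec y) t, fun _ => 0, rfl, ?_, by simp⟩
    intro t; simp
  | succ k ih =>
    simp only [ISA, Submodule.mem_inf, Submodule.mem_comap, LinearMap.mem_ker,
      Matrix.mulVecLin_apply, Submodule.mem_sup, LinearMap.mem_range]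
    constructor
    · rintro ⟨h0, y, hy, _, ⟨b, rfl⟩, hb⟩
      obtain ⟨z, w, hz0, hz, hC⟩ := (ih y).1 hy
      refine ⟨fun t => Nat.casesOn t v z, fun t => Nat.casesOn t (-b) w, rfl, ?_, ?_⟩
      · rintro (_ | t)
        · simp [hz0, ← hb, Matrix.mulVec_neg]
        · exact hz t
      · rintro (_ | t) ht
        · exact h0
        · exact hC t (by omega)
    · rintro ⟨z, w, rfl, hz, hC⟩
      refine ⟨hC 0 (by omega), z 1, (ih _).2 ⟨fun t => z (t + 1), fun t => w (t + 1), rfl,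
        fun t => hz (t + 1), fun t ht => hC (t + 1) (by omega)⟩, _, ⟨-w 0, rfl⟩, ?_⟩
      rw [hz 0]; simp [Matrix.mulVec_neg]

theorem ISA_eq {T : ℕ} (hT : n ≤ T) (Vstar : Submodule ℝ (Fin n → ℝ))
    (hVinv : ∀ v ∈ Vstar, A.mulVec v ∈ Vstar ⊔ LinearMap.range B.mulVecLin)
    (hVker : Vstar ≤ LinearMap.ker C.mulVecLin)
    (hVmax : ∀ W : Submodule ℝ (Fin n → ℝ),
      (∀ v ∈ W, A.mulVec v ∈ W ⊔ LinearMap.range B.mulVecLin) →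
      W ≤ LinearMap.ker C.mulVecLin → W ≤ Vstar) : Vstar = ISA A B C T := by
  apply le_antisymm
  · clear hT
    induction T with
    | zero => exact le_top
    | succ k ih => exact le_inf hVker fun v hv => sup_le_sup_right ih _ (hVinv v hv)
  · apply hVmax
    · intro v hv
      rw [ISA_fix A B C hT] at hv
      exact hv.2
    · rw [ISA_fix A B C hT]; exact inf_le_left
end

/-- data-driven formula for V*, the largest (A, Im B)-controlled
invariant subspace contained in Ker C. -/
theorem stmt_0
    (n m p N T : ℕ) (hT : n ≤ T)
    (A : Matrix (Fin n) (Fin n) ℝ) (B : Matrix (Fin n) (Fin m) ℝ)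
    (C : Matrix (Fin p) (Fin n) ℝ)
    -- V* : largest (A, Im B)-controlled invariant subspace contained in Ker C
    (Vstar : Submodule ℝ (Fin n → ℝ))
    (hVinv : ∀ v ∈ Vstar, A.mulVec v ∈ Vstar ⊔ LinearMap.range B.mulVecLin)
    (hVker : Vstar ≤ LinearMap.ker C.mulVecLin)
    (hVmax : ∀ W : Submodule ℝ (Fin n → ℝ),
      (∀ v ∈ W, A.mulVec v ∈ W ⊔ LinearMap.range B.mulVecLin) →
      W ≤ LinearMap.ker C.mulVecLin → W ≤ Vstar)
    -- data generated by N experiments of horizon T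
    (x : Fin N → ℕ → Fin n → ℝ) (u : Fin N → ℕ → Fin m → ℝ)
    (hdyn : ∀ i t, x i (t + 1) = A.mulVec (x i t) + B.mulVec (u i t))
    (X0 : Matrix (Fin n) (Fin N) ℝ) (hX0 : ∀ j i, X0 j i = x i 0 j)
    (U : Matrix (Fin T × Fin m) (Fin N) ℝ)
    (hU : ∀ (t : Fin T) (j : Fin m) (i : Fin N), U (t, j) i = u i t.val j)
    (X : Matrix (Fin T × Fin n) (Fin N) ℝ)
    (hX : ∀ (t : Fin T) (j : Fin n) (i : Fin N), X (t, j) i = x i (t.val + 1) j)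
    (Y : Matrix (Fin T × Fin p) (Fin N) ℝ)
    (hY : ∀ (t : Fin T) (j : Fin p) (i : Fin N), Y (t, j) i = C.mulVec (x i t.val) j)
    -- persistency of excitation
    (hpe : (Matrix.fromRows X0 U).rank = n + m * T)
    -- K_U and K0: matrices whose columns form bases of Ker U and Ker X0
    (kU k0 : ℕ)
    (KU : Matrix (Fin N) (Fin kU) ℝ)
    (hKUrange : LinearMap.range KU.mulVecLin = LinearMap.ker U.mulVecLin)
    (hKUinj : Function.Injective KU.mulVecLin)
    (K0 : Matrix (Fin N) (Fin k0) ℝ)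
    (hK0range : LinearMap.range K0.mulVecLin = LinearMap.ker X0.mulVecLin)
    (hK0inj : Function.Injective K0.mulVecLin) :
    -- V* = [X0·K_U  0]·Ker [Y·K_U  Y·K0]
    (Vstar : Set (Fin n → ℝ)) =
      {v | ∃ (α : Fin kU → ℝ) (β : Fin k0 → ℝ),
        (Y * KU).mulVec α + (Y * K0).mulVec β = 0 ∧
        v = (X0 * KU).mulVec α} := by
  have hsurj : ∀ (a : Fin n → ℝ) (b : Fin T × Fin m → ℝ), ∃ g, X0.mulVec g = a ∧ U.mulVec g = b := by
    intro a b
    have htop : LinearMap.range (Matrix.fromRows X0 U).mulVecLin = ⊤ := by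
      apply Submodule.eq_top_of_finrank_eq
      change (Matrix.fromRows X0 U).rank = _
      rw [hpe]
      simp [mul_comm]
    obtain ⟨g, hg⟩ := LinearMap.range_eq_top.1 htop (Sum.elim a b)
    rw [Matrix.mulVecLin_apply, Matrix.fromRows_mulVec] at hg
    exact ⟨g, funext fun i => congrFun hg (Sum.inl i), funext fun i => congrFun hg (Sum.inr i)⟩
  have hlin : ∀ (g : Fin N → ℝ) (t : ℕ), ∑ i, g i • x i (t + 1) =
      A.mulVec (∑ i, g i • x i t) + B.mulVec (∑ i, g i • u i t) := by
    intro g t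
    simp only [← Matrix.mulVecLin_apply, map_sum, map_smul, ← Finset.sum_add_distrib, ← smul_add]
    exact Finset.sum_congr rfl fun i _ => by rw [hdyn]; rfl
  have hX0g : ∀ g, X0.mulVec g = ∑ i, g i • x i 0 := by
    intro g; ext j
    simp [Matrix.mulVec, dotProduct, hX0, mul_comm]
  have hUg : ∀ g (t : Fin T) j, U.mulVec g (t, j) = (∑ i, g i • u i t.val) j := by
    intro g t j
    simp [Matrix.mulVec, dotProduct, hU, mul_comm]
  have hYg : ∀ g (t : Fin T) j, Y.mulVec g (t, j) = C.mulVec (∑ i, g i • x i t.val) j := by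
    intro g t j
    rw [← Matrix.mulVecLin_apply C]
    simp only [map_sum, map_smul, Matrix.mulVecLin_apply, Finset.sum_apply, Pi.smul_apply,
      smul_eq_mul]
    rw [Matrix.mulVec, dotProduct]
    exact Finset.sum_congr rfl fun i _ => by rw [hY, mul_comm]
  rw [ISA_eq A B C hT Vstar hVinv hVker hVmax]
  ext v
  rw [SetLike.mem_coe, mem_ISA, Set.mem_setOf_eq]
  constructor
  · rintro ⟨z, w, rfl, hz, hC⟩
    obtain ⟨g1, h1, h1'⟩ := hsurj (z 0) 0
    obtain ⟨g2, h2, h2'⟩ := hsurj 0 (fun q => w q.1.val q.2)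
    have m1 : g1 ∈ LinearMap.range KU.mulVecLin := by
      rw [hKUrange]; exact h1'
    have m2 : g2 ∈ LinearMap.range K0.mulVecLin := by
      rw [hK0range]; exact h2
    obtain ⟨α, rfl⟩ := m1
    obtain ⟨β, rfl⟩ := m2
    rw [Matrix.mulVecLin_apply] at h1 h1' h2 h2'
    refine ⟨α, β, ?_, ?_⟩
    · rw [← Matrix.mulVec_mulVec, ← Matrix.mulVec_mulVec, ← Matrix.mulVec_add]
      set g := KU.mulVec α + K0.mulVec β with hg
      have hU' : U.mulVec g = fun q => w q.1.val q.2 := by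
        rw [hg, Matrix.mulVec_add, h1', h2', zero_add]
      have key : ∀ t ≤ T, ∑ i, g i • x i t = z t := by
        intro t
        induction t with
        | zero => intro _; rw [← hX0g, hg, Matrix.mulVec_add, h1, h2, add_zero]
        | succ t ih =>
          intro ht
          rw [hlin, ih (by omega), hz]
          congr 2
          ext j
          have := hUg g ⟨t, by omega⟩ j
          rw [← this, hU']
      ext ⟨t, j⟩
      rw [hYg, key _ t.2.le, hC _ t.2]; rfl
    · rw [← Matrix.mulVec_mulVec, h1]
  · rintro ⟨α, β, h, rfl⟩
    rw [← Matrix.mulVec_mulVec, ← Matrix.mulVec_mulVec, ← Matrix.mulVec_add] at h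
    have m2 : X0.mulVec (K0.mulVec β) = 0 := by
      have : K0.mulVecLin β ∈ LinearMap.ker X0.mulVecLin := by
        rw [← hK0range]; exact ⟨β, rfl⟩
      exact this
    refine ⟨fun t => ∑ i, (KU.mulVec α + K0.mulVec β) i • x i t,
      fun t => ∑ i, (KU.mulVec α + K0.mulVec β) i • u i t, ?_, fun t => hlin _ t, ?_⟩
    · change ∑ i, (KU.mulVec α + K0.mulVec β) i • x i 0 = _
      rw [← hX0g, Matrix.mulVec_add, m2, add_zero, Matrix.mulVec_mulVec]
    · intro t ht
      ext j
      have := hYg (KU.mulVec α + K0.mulVec β) ⟨t, ht⟩ j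
      rw [← this, h]; rfl
end

section
/- Assume T ≥ n and persistency of excitation. Then S* = H·X·K0·Ker(Y·K0), where H = [0 ⋯ 0 I_n] ∈ ℝ^{n×nT} selects the last n rows; that is, S* is exactly the set of final states x(T) = H·X·K0·β over all β satisfying Y·K0·β = 0. -/
open Matrix in
/-- The conditioned-invariant subspace recursion. -/
def condSeq {n m p : ℕ} (A : Matrix (Fin n) (Fin n) ℝ) (B : Matrix (Fin n) (Fin m) ℝ)
    (C : Matrix (Fin p) (Fin n) ℝ) : ℕ → Submodule ℝ (Fin n → ℝ)
  | 0 => ⊥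
  | k + 1 => Submodule.map A.mulVecLin (condSeq A B C k ⊓ LinearMap.ker C.mulVecLin) ⊔
      LinearMap.range B.mulVecLin

theorem condSeq_le_succ {n m p : ℕ} (A : Matrix (Fin n) (Fin n) ℝ) (B : Matrix (Fin n) (Fin m) ℝ)
    (C : Matrix (Fin p) (Fin n) ℝ) (k : ℕ) : condSeq A B C k ≤ condSeq A B C (k + 1) := by
  induction k with
  | zero => exact bot_le
  | succ k ih =>
    exact sup_le_sup_right (Submodule.map_mono (inf_le_inf_right _ ih)) _

theorem condSeq_stable {n m p : ℕ} (A : Matrix (Fin n) (Fin n) ℝ) (B : Matrix (Fin n) (Fin m) ℝ)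
    (C : Matrix (Fin p) (Fin n) ℝ) (k : ℕ) :
    condSeq A B C k = condSeq A B C (k + 1) ∨
      k + 1 ≤ Module.finrank ℝ (condSeq A B C (k + 1)) := by
  induction k with
  | zero =>
    by_cases h : condSeq A B C 0 = condSeq A B C 1
    · exact Or.inl h
    · right
      have := Submodule.finrank_lt_finrank_of_lt (lt_of_le_of_ne (condSeq_le_succ A B C 0) h)
      simp only [zero_add] at *
      omega
  | succ k ih =>
    by_cases h : condSeq A B C (k + 1) = condSeq A B C (k + 1 + 1)
    · exact Or.inl h
    · right
      have h2 := Submodule.finrank_lt_finrank_of_lt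
        (lt_of_le_of_ne (condSeq_le_succ A B C (k + 1)) h)
      rcases ih with ih | ih
      · exfalso
        apply h
        conv_lhs => rw [condSeq, ih]
        rfl
      · omega

theorem condSeq_traj {n m p : ℕ} (A : Matrix (Fin n) (Fin n) ℝ) (B : Matrix (Fin n) (Fin m) ℝ)
    (C : Matrix (Fin p) (Fin n) ℝ) (k : ℕ) (ξ : Fin n → ℝ) (h : ξ ∈ condSeq A B C k) :
    ∃ (z : ℕ → Fin n → ℝ) (v : ℕ → Fin m → ℝ), z 0 = 0 ∧ z k = ξ ∧
      ∀ t < k, C.mulVec (z t) = 0 ∧ z (t + 1) = A.mulVec (z t) + B.mulVec (v t) := by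
  induction k generalizing ξ with
  | zero =>
    have h0 : ξ = 0 := by simpa [condSeq] using h
    exact ⟨fun _ => 0, fun _ => 0, rfl, h0.symm, by simp⟩
  | succ k ih =>
    obtain ⟨a, ⟨w, ⟨hw, hwC⟩, rfl⟩, b, ⟨c, rfl⟩, rfl⟩ := Submodule.mem_sup.1 h
    obtain ⟨z, v, h0, hk, hz⟩ := ih w hw
    refine ⟨fun t => if t ≤ k then z t else A.mulVec w + B.mulVec c,
      fun t => if t < k then v t else c, by simpa using h0, by simp, ?_⟩
    intro t ht
    rcases Nat.lt_succ_iff_lt_or_eq.1 ht with h1 | rfl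
    · have := hz t h1
      simp only [h1, h1.le, if_true, Nat.succ_le_of_lt h1]
      exact this
    · simp only [le_refl, if_true, hk, lt_irrefl, if_false, Nat.not_succ_le_self]
      exact ⟨by simpa using hwC, trivial⟩

/-- data-driven formula for S*, the smallest (A, Ker C)-conditioned
invariant subspace containing Im B.  The selector H = [0 ⋯ 0 I_n] picks the last
block (the final state x(T)) of a stacked trajectory. -/
theorem stmt_1
    (n m p N T : ℕ) (hn : 0 < n) (hT : n ≤ T)
    (A : Matrix (Fin n) (Fin n) ℝ) (B : Matrix (Fin n) (Fin m) ℝ)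
    (C : Matrix (Fin p) (Fin n) ℝ)
    -- S* : smallest (A, Ker C)-conditioned invariant subspace containing Im B
    (Sstar : Submodule ℝ (Fin n → ℝ))
    (hSinv : ∀ v ∈ Sstar ⊓ LinearMap.ker C.mulVecLin, A.mulVec v ∈ Sstar)
    (hSim : LinearMap.range B.mulVecLin ≤ Sstar)
    (hSmin : ∀ W : Submodule ℝ (Fin n → ℝ),
      (∀ v ∈ W ⊓ LinearMap.ker C.mulVecLin, A.mulVec v ∈ W) →
      LinearMap.range B.mulVecLin ≤ W → Sstar ≤ W)
    -- data generated by N experiments of horizon T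
    (x : Fin N → ℕ → Fin n → ℝ) (u : Fin N → ℕ → Fin m → ℝ)
    (hdyn : ∀ i t, x i (t + 1) = A.mulVec (x i t) + B.mulVec (u i t))
    (X0 : Matrix (Fin n) (Fin N) ℝ) (hX0 : ∀ j i, X0 j i = x i 0 j)
    (U : Matrix (Fin T × Fin m) (Fin N) ℝ)
    (hU : ∀ (t : Fin T) (j : Fin m) (i : Fin N), U (t, j) i = u i t.val j)
    (X : Matrix (Fin T × Fin n) (Fin N) ℝ)
    (hX : ∀ (t : Fin T) (j : Fin n) (i : Fin N), X (t, j) i = x i (t.val + 1) j)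
    (Y : Matrix (Fin T × Fin p) (Fin N) ℝ)
    (hY : ∀ (t : Fin T) (j : Fin p) (i : Fin N), Y (t, j) i = C.mulVec (x i t.val) j)
    -- persistency of excitation
    (hpe : (Matrix.fromRows X0 U).rank = n + m * T)
    -- K0: matrix whose columns form a basis of Ker X0
    (k0 : ℕ)
    (K0 : Matrix (Fin N) (Fin k0) ℝ)
    (hK0range : LinearMap.range K0.mulVecLin = LinearMap.ker X0.mulVecLin)
    (hK0inj : Function.Injective K0.mulVecLin) :
    -- S* = H·X·K0·Ker(Y·K0): the set of final states x(T) = H·X·K0·β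
    (Sstar : Set (Fin n → ℝ)) =
      {ξ | ∃ β : Fin k0 → ℝ, (Y * K0).mulVec β = 0 ∧
        ξ = fun j => (X * K0).mulVec β (⟨T - 1, by omega⟩, j)} := by
  have hT0 : 0 < T := by omega
  -- combined trajectories
  have hlin : ∀ (α : Fin N → ℝ) (t : ℕ), (∑ i, α i • x i (t + 1)) =
      A.mulVec (∑ i, α i • x i t) + B.mulVec (∑ i, α i • u i t) := by
    intro α t
    simp only [hdyn, smul_add, Finset.sum_add_distrib, Matrix.mulVec_sum, Matrix.mulVec_smul]
  have hX0' : ∀ α : Fin N → ℝ, X0.mulVec α = ∑ i, α i • x i 0 := by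
    intro α; ext j
    simp [Matrix.mulVec, dotProduct, hX0, mul_comm]
  have hX' : ∀ (α : Fin N → ℝ) (t : Fin T) (j : Fin n),
      X.mulVec α (t, j) = (∑ i, α i • x i (t.val + 1)) j := by
    intro α t j
    simp [Matrix.mulVec, dotProduct, hX, mul_comm]
  have hU' : ∀ (α : Fin N → ℝ) (t : Fin T) (j : Fin m),
      U.mulVec α (t, j) = (∑ i, α i • u i t.val) j := by
    intro α t j
    simp [Matrix.mulVec, dotProduct, hU, mul_comm]
  have hY' : ∀ (α : Fin N → ℝ) (t : Fin T) (j : Fin p),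
      Y.mulVec α (t, j) = C.mulVec (∑ i, α i • x i t.val) j := by
    intro α t j
    rw [Matrix.mulVec_sum]
    simp only [Matrix.mulVec_smul, Finset.sum_apply, Pi.smul_apply, smul_eq_mul]
    rw [Matrix.mulVec, dotProduct]
    exact Finset.sum_congr rfl fun i _ => by rw [hY, mul_comm]
  have hsurj : Function.Surjective (Matrix.fromRows X0 U).mulVecLin := by
    rw [← LinearMap.range_eq_top]
    apply Submodule.eq_top_of_finrank_eq
    rw [← Matrix.rank, hpe]
    simp [mul_comm]
  have hTT : T - 1 + 1 = T := by omega
  apply Set.Subset.antisymm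
  · intro ξ hξ
    have hst : condSeq A B C T = condSeq A B C (T + 1) := by
      rcases condSeq_stable A B C T with h | h
      · exact h
      · have := Submodule.finrank_le (condSeq A B C (T + 1))
        simp at this
        omega
    have hle : Sstar ≤ condSeq A B C T := by
      apply hSmin
      · intro v hv
        rw [hst]
        exact Submodule.mem_sup_left ⟨v, hv, rfl⟩
      · rw [hst]
        exact le_sup_right
    obtain ⟨z, v, h0, hk, hz⟩ := condSeq_traj A B C T ξ (hle hξ)
    obtain ⟨α, hα⟩ := hsurj (Sum.elim 0 (fun q => v q.1.val q.2))
    rw [Matrix.mulVecLin_apply, Matrix.fromRows_mulVec] at hα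
    have hα0 : X0.mulVec α = 0 := by
      ext j; exact congrFun hα (Sum.inl j)
    have hαU : ∀ t < T, ∑ i, α i • u i t = v t := by
      intro t ht
      ext j
      rw [← hU' α ⟨t, ht⟩ j]
      exact congrFun hα (Sum.inr (⟨t, ht⟩, j))
    have hzx : ∀ t ≤ T, ∑ i, α i • x i t = z t := by
      intro t
      induction t with
      | zero => intro _; rw [← hX0', hα0, h0]
      | succ t ih =>
        intro ht
        rw [hlin, ih (by omega), hαU t (by omega), (hz t (by omega)).2]
    have hmem : α ∈ LinearMap.range K0.mulVecLin := by
      rw [hK0range]; simpa using hα0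
    obtain ⟨β, hβ⟩ := hmem
    rw [Matrix.mulVecLin_apply] at hβ
    refine ⟨β, ?_, ?_⟩
    · rw [← Matrix.mulVec_mulVec, hβ]
      ext ⟨t, j⟩
      rw [hY', hzx _ t.2.le, (hz _ t.2).1]
      rfl
    · ext j
      rw [← Matrix.mulVec_mulVec, hβ, hX']
      simp only [hTT]
      rw [hzx T le_rfl, hk]
  · rintro ξ ⟨β, hβY, rfl⟩
    rw [← Matrix.mulVec_mulVec] at hβY
    have hα0 : X0.mulVec (K0.mulVec β) = 0 := by
      have : K0.mulVec β ∈ LinearMap.ker X0.mulVecLin := by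
        rw [← hK0range]; exact ⟨β, rfl⟩
      simpa using this
    have key : ∀ t ≤ T, ∑ i, (K0.mulVec β) i • x i t ∈ Sstar := by
      intro t
      induction t with
      | zero => intro _; rw [← hX0', hα0]; exact Sstar.zero_mem
      | succ t ih =>
        intro ht
        rw [hlin]
        refine Sstar.add_mem (hSinv _ ⟨ih (by omega), ?_⟩) (hSim ⟨_, rfl⟩)
        rw [SetLike.mem_coe, LinearMap.mem_ker, Matrix.mulVecLin_apply]
        ext j
        rw [← hY' _ ⟨t, by omega⟩ j, hβY]
        rfl
    have h := key T le_rfl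
    rw [SetLike.mem_coe]
    convert h using 1
    ext j
    rw [← Matrix.mulVec_mulVec, hX']
    simp only [hTT]
end

section
/- If the stacked matrix [U_{0,T}; X_{0,T}] has full row rank m + n and V ⊆ ℝⁿ is an (A, Im B)-controlled invariant subspace, then there exists a matrix G ∈ ℝ^{T×n} with X_{0,T}·G = I_n and (X_{1,T}·G)·V ⊆ V; moreover, for any such G, the feedback gain F = U_{0,T}·G satisfies A + B·F = X_{1,T}·G and hence (A + B·F)·V ⊆ V. -/
/-- data-driven feedback rendering a controlled invariant
subspace invariant.  Data comes from a single trajectory of horizon T. -/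
theorem stmt_2
    (n m T : ℕ)
    (A : Matrix (Fin n) (Fin n) ℝ) (B : Matrix (Fin n) (Fin m) ℝ)
    -- single experimental trajectory
    (x : ℕ → Fin n → ℝ) (u : ℕ → Fin m → ℝ)
    (hdyn : ∀ t, x (t + 1) = A.mulVec (x t) + B.mulVec (u t))
    (X0T : Matrix (Fin n) (Fin T) ℝ) (hX0T : ∀ j t, X0T j t = x t.val j)
    (X1T : Matrix (Fin n) (Fin T) ℝ) (hX1T : ∀ j t, X1T j t = x (t.val + 1) j)
    (U0T : Matrix (Fin m) (Fin T) ℝ) (hU0T : ∀ j t, U0T j t = u t.val j)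
    -- [U_{0,T}; X_{0,T}] has full row rank m + n
    (hrank : (Matrix.fromRows U0T X0T).rank = m + n)
    -- V is an (A, Im B)-controlled invariant subspace
    (V : Submodule ℝ (Fin n → ℝ))
    (hV : ∀ v ∈ V, A.mulVec v ∈ V ⊔ LinearMap.range B.mulVecLin) :
    -- there exists G with X_{0,T}·G = I and (X_{1,T}·G)·V ⊆ V, and for any such
    -- G the feedback F = U_{0,T}·G satisfies A + B·F = X_{1,T}·G, hence
    -- (A + B·F)·V ⊆ V
    (∃ G : Matrix (Fin T) (Fin n) ℝ,
        X0T * G = 1 ∧ ∀ v ∈ V, (X1T * G).mulVec v ∈ V) ∧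
    (∀ G : Matrix (Fin T) (Fin n) ℝ,
        X0T * G = 1 → (∀ v ∈ V, (X1T * G).mulVec v ∈ V) →
        A + B * (U0T * G) = X1T * G ∧
        ∀ v ∈ V, (A + B * (U0T * G)).mulVec v ∈ V) := by
  have hdata : X1T = A * X0T + B * U0T := by
    ext j t
    have hx : (fun k => X0T k t) = x t.val := funext fun k => hX0T k t
    have hu : (fun k => U0T k t) = u t.val := funext fun k => hU0T k t
    rw [hX1T, hdyn, ← hx, ← hu]
    rfl
  have key : ∀ G : Matrix (Fin T) (Fin n) ℝ, X0T * G = 1 →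
      A + B * (U0T * G) = X1T * G := by
    intro G hG
    rw [hdata, Matrix.add_mul, Matrix.mul_assoc, Matrix.mul_assoc, hG, Matrix.mul_one]
  refine ⟨?_, fun G hG hGV => ⟨key G hG, fun v hv => by rw [key G hG]; exact hGV v hv⟩⟩
  -- a friend F of V
  have hF : ∃ F : Matrix (Fin m) (Fin n) ℝ, ∀ v ∈ V, (A + B * F).mulVec v ∈ V := by
    have h1 : ∀ v : V, ∃ w : Fin m → ℝ, A.mulVec v + B.mulVec w ∈ V := by
      intro v
      obtain ⟨y, hy, z, ⟨w, rfl⟩, h⟩ := Submodule.mem_sup.1 (hV v v.2)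
      refine ⟨-w, ?_⟩
      rw [← h, Matrix.mulVecLin_apply, Matrix.mulVec_neg]
      simpa using hy
    choose w hw using h1
    let b := Module.finBasis ℝ V
    let f : V →ₗ[ℝ] (Fin m → ℝ) := b.constr ℝ (fun i => w (b i))
    have h0 : V.mkQ ∘ₗ (A.mulVecLin ∘ₗ V.subtype + B.mulVecLin ∘ₗ f) = 0 := by
      refine b.ext fun i => ?_
      have hfi : f (b i) = w (b i) := b.constr_basis ℝ _ i
      simp only [LinearMap.comp_apply, LinearMap.add_apply, hfi, Submodule.mkQ_apply,
        LinearMap.zero_apply]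
      exact (Submodule.Quotient.mk_eq_zero V).2 (hw (b i))
    obtain ⟨g, hg⟩ := f.exists_extend
    refine ⟨LinearMap.toMatrix' g, fun v hv => ?_⟩
    have h2 := LinearMap.congr_fun h0 ⟨v, hv⟩
    have h3 : A.mulVec v + B.mulVec (f ⟨v, hv⟩) ∈ V :=
      (Submodule.Quotient.mk_eq_zero V).1 h2
    have h4 : g v = f ⟨v, hv⟩ := LinearMap.congr_fun hg ⟨v, hv⟩
    rw [Matrix.add_mulVec, ← Matrix.mulVec_mulVec, LinearMap.toMatrix'_mulVec, h4]
    exact h3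
  obtain ⟨F, hF⟩ := hF
  have hsurj : Function.Surjective (Matrix.fromRows U0T X0T).mulVecLin := by
    rw [← LinearMap.range_eq_top]
    apply Submodule.eq_top_of_finrank_eq
    rw [Module.finrank_fintype_fun_eq_card, Fintype.card_sum, Fintype.card_fin, Fintype.card_fin]
    exact hrank
  choose g hg using fun i : Fin n =>
    hsurj (Sum.elim (fun j => F j i) (fun j => (1 : Matrix (Fin n) (Fin n) ℝ) j i))
  let G : Matrix (Fin T) (Fin n) ℝ := Matrix.of fun t i => g i t
  have hX : X0T * G = 1 := by
    ext j i
    exact congrFun (hg i) (Sum.inr j)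
  have hU : U0T * G = F := by
    ext j i
    exact congrFun (hg i) (Sum.inl j)
  refine ⟨G, hX, fun v hv => ?_⟩
  rw [← key G hX, hU]
  exact hF v hv
end

section
/- If the stacked matrix [U_{0,T}; X_{0,T}] has full row rank m + n, then for every feedback gain F ∈ ℝ^{m×n} there exists a matrix G ∈ ℝ^{T×n} such that X_{0,T}·G = I_n, U_{0,T}·G = F, and the closed-loop matrix satisfies A + B·F = X_{1,T}·G. -/
/-- data-driven parametrization of closed-loop matrices
(cf. De Persis–Tesi): under full row rank of [U_{0,T}; X_{0,T}], every feedback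
gain F admits G with X_{0,T}·G = I, U_{0,T}·G = F and A + B·F = X_{1,T}·G. -/
theorem stmt_3
    (n m T : ℕ)
    (A : Matrix (Fin n) (Fin n) ℝ) (B : Matrix (Fin n) (Fin m) ℝ)
    -- single experimental trajectory
    (x : ℕ → Fin n → ℝ) (u : ℕ → Fin m → ℝ)
    (hdyn : ∀ t, x (t + 1) = A.mulVec (x t) + B.mulVec (u t))
    (X0T : Matrix (Fin n) (Fin T) ℝ) (hX0T : ∀ j t, X0T j t = x t.val j)
    (X1T : Matrix (Fin n) (Fin T) ℝ) (hX1T : ∀ j t, X1T j t = x (t.val + 1) j)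
    (U0T : Matrix (Fin m) (Fin T) ℝ) (hU0T : ∀ j t, U0T j t = u t.val j)
    -- [U_{0,T}; X_{0,T}] has full row rank m + n
    (hrank : (Matrix.fromRows U0T X0T).rank = m + n) :
    ∀ F : Matrix (Fin m) (Fin n) ℝ,
      ∃ G : Matrix (Fin T) (Fin n) ℝ,
        X0T * G = 1 ∧ U0T * G = F ∧ A + B * F = X1T * G := by
  intro F
  have hsurj : Function.Surjective (Matrix.fromRows U0T X0T).mulVec := by
    have h : LinearMap.range (Matrix.fromRows U0T X0T).mulVecLin = ⊤ := by
      apply Submodule.eq_top_of_finrank_eq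
      have h2 : Module.finrank ℝ (LinearMap.range (Matrix.fromRows U0T X0T).mulVecLin) = m + n :=
        hrank
      rw [h2]
      simp
    exact LinearMap.range_eq_top.mp h
  obtain ⟨R, hR⟩ := Matrix.mulVec_surjective_iff_exists_right_inverse.mp hsurj
  have hG : Matrix.fromRows U0T X0T * (R * Matrix.fromRows F (1 : Matrix (Fin n) (Fin n) ℝ)) = Matrix.fromRows F (1 : Matrix (Fin n) (Fin n) ℝ) := by
    rw [← Matrix.mul_assoc, hR, Matrix.one_mul]
  rw [Matrix.fromRows_mul] at hG
  obtain ⟨hU, hX⟩ := Matrix.fromRows_inj hG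
  have hX1 : X1T = A * X0T + B * U0T := by
    ext j t
    rw [hX1T, hdyn]
    simp [Matrix.mul_apply, Matrix.mulVec, dotProduct, hX0T, hU0T]
  refine ⟨R * Matrix.fromRows F (1 : Matrix (Fin n) (Fin n) ℝ), hX, hU, ?_⟩
  rw [hX1, Matrix.add_mul, Matrix.mul_assoc, Matrix.mul_assoc, hX, hU, Matrix.mul_one]
end

section
/- Assume R* = V* ∩ S* = {0}, and let F ∈ ℝ^{m×n} be any feedback gain such that (A + B·F)·V* ⊆ V*. Then the invariant zeros of (A, B, C) are exactly the eigenvalues over ℂ of the restriction of A + B·F to the invariant subspace V* (equivalently, of the complexification of A + B·F restricted to the complexification of V*). -/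
/-- The Rosenbrock system matrix [zI − A, −B; C, 0] over ℂ. -/
noncomputable def rosenbrock {n m p : ℕ} (A : Matrix (Fin n) (Fin n) ℝ)
    (B : Matrix (Fin n) (Fin m) ℝ) (C : Matrix (Fin p) (Fin n) ℝ) (z : ℂ) :
    Matrix (Fin n ⊕ Fin p) (Fin n ⊕ Fin m) ℂ :=
  Matrix.fromBlocks (z • (1 : Matrix (Fin n) (Fin n) ℂ) - A.map Complex.ofReal)
    (-(B.map Complex.ofReal)) (C.map Complex.ofReal) 0

/-- z is an invariant zero of (A,B,C) if the Rosenbrock matrix drops rank below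
its normal rank max_{s ∈ ℂ} rank [sI − A, −B; C, 0]. -/
noncomputable def IsInvariantZero {n m p : ℕ} (A : Matrix (Fin n) (Fin n) ℝ)
    (B : Matrix (Fin n) (Fin m) ℝ) (C : Matrix (Fin p) (Fin n) ℝ) (z : ℂ) : Prop :=
  (rosenbrock A B C z).rank < ⨆ s : ℂ, (rosenbrock A B C s).rank


lemma re_mulVec {k l : ℕ} (M : Matrix (Fin k) (Fin l) ℝ) (x : Fin l → ℂ) :
    (fun j => ((M.map Complex.ofReal).mulVec x j).re) = M.mulVec (fun j => (x j).re) := by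
  funext j
  simp [Matrix.mulVec, dotProduct]

lemma im_mulVec {k l : ℕ} (M : Matrix (Fin k) (Fin l) ℝ) (x : Fin l → ℂ) :
    (fun j => ((M.map Complex.ofReal).mulVec x j).im) = M.mulVec (fun j => (x j).im) := by
  funext j
  simp [Matrix.mulVec, dotProduct]

lemma mem_cspan_iff {n : ℕ} (V : Submodule ℝ (Fin n → ℝ)) (v : Fin n → ℂ) :
    v ∈ Submodule.span ℂ
      ((fun r : Fin n → ℝ => fun j => (r j : ℂ)) '' (V : Set (Fin n → ℝ))) ↔
    (fun j => (v j).re) ∈ V ∧ (fun j => (v j).im) ∈ V := by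
  constructor
  · intro h
    induction h using Submodule.span_induction with
    | mem x hx =>
      obtain ⟨r, hr, rfl⟩ := hx
      refine ⟨by simpa using hr, ?_⟩
      have : (fun j => ((r j : ℂ)).im) = (0 : Fin n → ℝ) := by funext j; simp
      exact this ▸ V.zero_mem
    | zero =>
      have : (fun _ => 0) = (0 : Fin n → ℝ) := rfl
      simp [this]
    | add x y _ _ hx hy =>
      exact ⟨V.add_mem hx.1 hy.1, V.add_mem hx.2 hy.2⟩
    | smul c x _ hx =>
      refine ⟨?_, ?_⟩
      · have := V.sub_mem (V.smul_mem c.re hx.1) (V.smul_mem c.im hx.2)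
        convert this using 1
        funext j; simp
      · have := V.add_mem (V.smul_mem c.re hx.2) (V.smul_mem c.im hx.1)
        convert this using 1
        funext j; simp
  · rintro ⟨h1, h2⟩
    have e : v = (fun j => (((v j).re : ℝ) : ℂ)) + Complex.I • (fun j => (((v j).im : ℝ) : ℂ)) := by
      funext j
      simp [mul_comm Complex.I, Complex.re_add_im]
    rw [e]
    refine Submodule.add_mem _ (Submodule.subset_span ⟨_, h1, rfl⟩)
      (Submodule.smul_mem _ _ (Submodule.subset_span ⟨_, h2, rfl⟩))

/-- kernel of the Rosenbrock matrix, in block form -/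
lemma mem_ker_rosenbrock {n m p : ℕ} (A : Matrix (Fin n) (Fin n) ℝ)
    (B : Matrix (Fin n) (Fin m) ℝ) (C : Matrix (Fin p) (Fin n) ℝ) (z : ℂ)
    (w : Fin n ⊕ Fin m → ℂ) :
    w ∈ LinearMap.ker (rosenbrock A B C z).mulVecLin ↔
      z • (w ∘ Sum.inl) - (A.map Complex.ofReal).mulVec (w ∘ Sum.inl)
        = (B.map Complex.ofReal).mulVec (w ∘ Sum.inr) ∧
      (C.map Complex.ofReal).mulVec (w ∘ Sum.inl) = 0 := by
  rw [LinearMap.mem_ker, Matrix.mulVecLin_apply, rosenbrock, Matrix.fromBlocks_mulVec,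
    Matrix.sub_mulVec, Matrix.smul_mulVec, Matrix.one_mulVec, Matrix.neg_mulVec,
    Matrix.zero_mulVec, add_zero]
  constructor
  · intro h
    refine ⟨?_, ?_⟩
    · rw [← sub_eq_zero, sub_eq_add_neg _ ((B.map Complex.ofReal).mulVec _)]
      funext i
      exact congrFun h (Sum.inl i)
    · funext i
      exact congrFun h (Sum.inr i)
  · rintro ⟨h1, h2⟩
    rw [h1, h2, add_neg_cancel]
    funext i
    cases i <;> rfl

lemma ker_core {n m p : ℕ}
    (A : Matrix (Fin n) (Fin n) ℝ) (B : Matrix (Fin n) (Fin m) ℝ)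
    (C : Matrix (Fin p) (Fin n) ℝ)
    (V : Submodule ℝ (Fin n → ℝ))
    (hVmax : ∀ W : Submodule ℝ (Fin n → ℝ),
      (∀ v ∈ W, A.mulVec v ∈ W ⊔ LinearMap.range B.mulVecLin) →
      W ≤ LinearMap.ker C.mulVecLin → W ≤ V)
    (hVB : ∀ v ∈ V, v ∈ LinearMap.range B.mulVecLin → v = 0)
    (F : Matrix (Fin m) (Fin n) ℝ)
    (hF : ∀ v ∈ V, (A + B * F).mulVec v ∈ V)
    (z : ℂ) (x : Fin n → ℂ) (u : Fin m → ℂ)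
    (h1 : z • x - (A.map Complex.ofReal).mulVec x = (B.map Complex.ofReal).mulVec u)
    (h2 : (C.map Complex.ofReal).mulVec x = 0) :
    ((fun j => (x j).re) ∈ V ∧ (fun j => (x j).im) ∈ V) ∧
      ((A + B * F).map Complex.ofReal).mulVec x = z • x := by
  set a : Fin n → ℝ := fun j => (x j).re with ha
  set b : Fin n → ℝ := fun j => (x j).im with hb
  set q : Fin m → ℝ := fun j => (u j).re
  set r : Fin m → ℝ := fun j => (u j).im
  have e1 : z.re • a - z.im • b - A.mulVec a = B.mulVec q := by
    rw [← re_mulVec, ← re_mulVec, ← h1]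
    funext j; simp [ha, hb]
  have e2 : z.re • b + z.im • a - A.mulVec b = B.mulVec r := by
    rw [← im_mulVec, ← im_mulVec, ← h1]
    funext j; simp [ha, hb]
  have c1 : C.mulVec a = 0 := by
    rw [← re_mulVec, h2]; funext j; simp
  have c2 : C.mulVec b = 0 := by
    rw [← im_mulVec, h2]; funext j; simp
  have hW : Submodule.span ℝ {a, b} ≤ V := by
    have ma : a ∈ Submodule.span ℝ {a, b} := Submodule.subset_span (by simp)
    have mb : b ∈ Submodule.span ℝ {a, b} := Submodule.subset_span (by simp)
    apply hVmax
    · intro v hv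
      have : Submodule.span ℝ {a, b} ≤ Submodule.comap A.mulVecLin
          (Submodule.span ℝ {a, b} ⊔ LinearMap.range B.mulVecLin) := by
        rw [Submodule.span_le]
        rintro y (rfl | rfl)
        · show A.mulVec a ∈ Submodule.span ℝ {a, b} ⊔ LinearMap.range B.mulVecLin
          have : A.mulVec a = (z.re • a - z.im • b) - B.mulVec q := by rw [← e1]; abel
          rw [this]
          exact Submodule.sub_mem _ (Submodule.mem_sup_left
            (Submodule.sub_mem _ (Submodule.smul_mem _ _ ma) (Submodule.smul_mem _ _ mb)))
            (Submodule.mem_sup_right ⟨q, rfl⟩)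
        · show A.mulVec b ∈ Submodule.span ℝ {a, b} ⊔ LinearMap.range B.mulVecLin
          have : A.mulVec b = (z.re • b + z.im • a) - B.mulVec r := by rw [← e2]; abel
          rw [this]
          exact Submodule.sub_mem _ (Submodule.mem_sup_left
            (Submodule.add_mem _ (Submodule.smul_mem _ _ mb) (Submodule.smul_mem _ _ ma)))
            (Submodule.mem_sup_right ⟨r, rfl⟩)
      exact this hv
    · rw [Submodule.span_le]
      rintro y (rfl | rfl)
      · exact c1
      · exact c2
  have va : a ∈ V := hW (Submodule.subset_span (by simp))
  have vb : b ∈ V := hW (Submodule.subset_span (by simp))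
  refine ⟨⟨va, vb⟩, ?_⟩
  have f1 : z.re • a - z.im • b - (A + B * F).mulVec a = 0 := by
    apply hVB
    · exact V.sub_mem (V.sub_mem (V.smul_mem _ va) (V.smul_mem _ vb)) (hF a va)
    · refine ⟨q - F.mulVec a, ?_⟩
      rw [Matrix.mulVecLin_apply, Matrix.mulVec_sub, ← e1, Matrix.add_mulVec,
        Matrix.mulVec_mulVec]
      abel
  have f2 : z.re • b + z.im • a - (A + B * F).mulVec b = 0 := by
    apply hVB
    · exact V.sub_mem (V.add_mem (V.smul_mem _ vb) (V.smul_mem _ va)) (hF b vb)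
    · refine ⟨r - F.mulVec b, ?_⟩
      rw [Matrix.mulVecLin_apply, Matrix.mulVec_sub, ← e2, Matrix.add_mulVec,
        Matrix.mulVec_mulVec]
      abel
  rw [← re_mulVec] at f1
  rw [← im_mulVec] at f2
  funext j
  have g1 := congrFun f1 j
  have g2 := congrFun f2 j
  simp only [Pi.sub_apply, Pi.add_apply, Pi.smul_apply, smul_eq_mul, Pi.zero_apply, ha, hb]
    at g1 g2
  apply Complex.ext
  · rw [Pi.smul_apply, smul_eq_mul, Complex.mul_re]; linarith
  · rw [Pi.smul_apply, smul_eq_mul, Complex.mul_im]; linarith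

lemma rank_add_ker {ι κ : Type*} [Fintype ι] [Fintype κ] [DecidableEq κ] (M : Matrix ι κ ℂ) :
    M.rank + Module.finrank ℂ (LinearMap.ker M.mulVecLin) = Fintype.card κ := by
  rw [Matrix.rank, LinearMap.finrank_range_add_finrank_ker, Module.finrank_fintype_fun_eq_card]

/-- for a non-degenerate system, the invariant zeros are the
eigenvalues of (the complexification of) A + B·F restricted to the invariant
subspace V* (i.e. to the complexification of V*). -/
theorem stmt_5
    (n m p : ℕ)
    (A : Matrix (Fin n) (Fin n) ℝ) (B : Matrix (Fin n) (Fin m) ℝ)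
    (C : Matrix (Fin p) (Fin n) ℝ)
    -- V* : largest (A, Im B)-controlled invariant subspace contained in Ker C
    (Vstar : Submodule ℝ (Fin n → ℝ))
    (hVinv : ∀ v ∈ Vstar, A.mulVec v ∈ Vstar ⊔ LinearMap.range B.mulVecLin)
    (hVker : Vstar ≤ LinearMap.ker C.mulVecLin)
    (hVmax : ∀ W : Submodule ℝ (Fin n → ℝ),
      (∀ v ∈ W, A.mulVec v ∈ W ⊔ LinearMap.range B.mulVecLin) →
      W ≤ LinearMap.ker C.mulVecLin → W ≤ Vstar)
    -- S* : smallest (A, Ker C)-conditioned invariant subspace containing Im B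
    (Sstar : Submodule ℝ (Fin n → ℝ))
    (hSinv : ∀ v ∈ Sstar ⊓ LinearMap.ker C.mulVecLin, A.mulVec v ∈ Sstar)
    (hSim : LinearMap.range B.mulVecLin ≤ Sstar)
    (hSmin : ∀ W : Submodule ℝ (Fin n → ℝ),
      (∀ v ∈ W ⊓ LinearMap.ker C.mulVecLin, A.mulVec v ∈ W) →
      LinearMap.range B.mulVecLin ≤ W → Sstar ≤ W)
    -- non-degeneracy: R* = V* ∩ S* = {0}
    (hR : Vstar ⊓ Sstar = ⊥)
    -- F renders V* invariant for A + B·F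
    (F : Matrix (Fin m) (Fin n) ℝ)
    (hF : ∀ v ∈ Vstar, (A + B * F).mulVec v ∈ Vstar) :
    -- the invariant zeros are exactly the eigenvalues of the restriction of
    -- (the complexification of) A + B·F to (the complexification of) V*
    ∀ z : ℂ, IsInvariantZero A B C z ↔
      ∃ v : Fin n → ℂ,
        v ∈ Submodule.span ℂ
          ((fun r : Fin n → ℝ => fun j => (r j : ℂ)) '' (Vstar : Set (Fin n → ℝ))) ∧
        v ≠ 0 ∧ ((A + B * F).map Complex.ofReal).mulVec v = z • v := by
  have hVB : ∀ v ∈ Vstar, v ∈ LinearMap.range B.mulVecLin → v = 0 := by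
    intro v hv hb
    have : v ∈ Vstar ⊓ Sstar := ⟨hv, hSim hb⟩
    rw [hR] at this
    simpa using this
  -- trivial kernel vectors lie in every kernel
  have triv : ∀ (s z : ℂ) (w : Fin n ⊕ Fin m → ℂ), w ∘ Sum.inl = 0 →
      w ∈ LinearMap.ker (rosenbrock A B C z).mulVecLin →
      w ∈ LinearMap.ker (rosenbrock A B C s).mulVecLin := by
    intro s z w hw h
    rw [mem_ker_rosenbrock] at h ⊢
    simpa [hw] using h
  -- no eigenvector: minimal kernel
  have key : ∀ (s z : ℂ), (¬ ∃ v : Fin n → ℂ,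
        v ∈ Submodule.span ℂ
          ((fun r : Fin n → ℝ => fun j => (r j : ℂ)) '' (Vstar : Set (Fin n → ℝ))) ∧
        v ≠ 0 ∧ ((A + B * F).map Complex.ofReal).mulVec v = z • v) →
      ∀ w ∈ LinearMap.ker (rosenbrock A B C z).mulVecLin, w ∘ Sum.inl = 0 ∧
        w ∈ LinearMap.ker (rosenbrock A B C s).mulVecLin := by
    intro s z hz w hw
    have hw' := hw
    rw [mem_ker_rosenbrock] at hw'
    have hc := ker_core A B C Vstar hVmax hVB F hF z _ _ hw'.1 hw'.2
    have h0 : w ∘ Sum.inl = 0 := by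
      by_contra hne
      exact hz ⟨_, (mem_cspan_iff _ _).2 hc.1, hne, hc.2⟩
    exact ⟨h0, triv s z w h0 hw⟩
  have rk : ∀ s : ℂ, (rosenbrock A B C s).rank +
      Module.finrank ℂ (LinearMap.ker (rosenbrock A B C s).mulVecLin) =
        Fintype.card (Fin n ⊕ Fin m) := fun s => rank_add_ker _
  intro z
  constructor
  · intro h
    by_contra hz
    refine absurd h (not_lt.2 (ciSup_le fun s => ?_))
    have hle : LinearMap.ker (rosenbrock A B C z).mulVecLin ≤
        LinearMap.ker (rosenbrock A B C s).mulVecLin := fun w hw => (key s z hz w hw).2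
    have := Submodule.finrank_mono hle
    have h1 := rk s
    have h2 := rk z
    omega
  · rintro ⟨v, hv, hv0, hev⟩
    obtain ⟨s, hs⟩ : ∃ s : ℂ, ¬ Module.End.HasEigenvalue
        (Matrix.toLin' ((A + B * F).map Complex.ofReal)) s := by
      by_contra hcon
      push Not at hcon
      have hfin := Module.End.finite_hasEigenvalue
        (Matrix.toLin' ((A + B * F).map Complex.ofReal))
      exact Set.infinite_univ (hfin.subset fun s _ => hcon s)
    have hsn : ¬ ∃ v : Fin n → ℂ,
        v ∈ Submodule.span ℂ
          ((fun r : Fin n → ℝ => fun j => (r j : ℂ)) '' (Vstar : Set (Fin n → ℝ))) ∧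
        v ≠ 0 ∧ ((A + B * F).map Complex.ofReal).mulVec v = s • v := by
      rintro ⟨y, -, hy0, hy⟩
      apply hs
      refine Module.End.hasEigenvalue_of_hasEigenvector (x := y) ⟨?_, hy0⟩
      rw [Module.End.mem_eigenspace_iff, Matrix.toLin'_apply, hy]
    have hlt : LinearMap.ker (rosenbrock A B C s).mulVecLin <
        LinearMap.ker (rosenbrock A B C z).mulVecLin := by
      refine lt_of_le_of_ne (fun w hw => (key z s hsn w hw).2) ?_
      intro heq
      have hmem : Sum.elim v ((F.map Complex.ofReal).mulVec v) ∈
          LinearMap.ker (rosenbrock A B C z).mulVecLin := by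
        rw [mem_ker_rosenbrock, Sum.elim_comp_inl, Sum.elim_comp_inr]
        constructor
        · have hmap : (A + B * F).map Complex.ofReal =
              A.map Complex.ofReal + B.map Complex.ofReal * F.map Complex.ofReal := by
            ext i j
            simp [Matrix.mul_apply]
          rw [← hev, hmap, Matrix.add_mulVec, Matrix.mulVec_mulVec]
          abel
        · have hri := (mem_cspan_iff _ _).1 hv
          have r1 : C.mulVec _ = 0 := hVker hri.1
          have r2 : C.mulVec _ = 0 := hVker hri.2
          rw [← re_mulVec] at r1
          rw [← im_mulVec] at r2
          funext j
          exact Complex.ext (congrFun r1 j) (congrFun r2 j)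
      rw [← heq] at hmem
      have := (key z s hsn _ hmem).1
      rw [Sum.elim_comp_inl] at this
      exact hv0 this
    have hfl := Submodule.finrank_lt_finrank_of_lt hlt
    have h1 := rk s
    have h2 := rk z
    have hb : BddAbove (Set.range fun s : ℂ => (rosenbrock A B C s).rank) := by
      refine ⟨Fintype.card (Fin n ⊕ Fin m), ?_⟩
      rintro _ ⟨t, rfl⟩
      exact Matrix.rank_le_card_width _
    have h3 : (rosenbrock A B C s).rank ≤ ⨆ s : ℂ, (rosenbrock A B C s).rank := le_ciSup hb s
    unfold IsInvariantZero
    omega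
end

section
/- Assume T ≥ n and persistency of excitation. For any initial state x̄₀ ∈ ℝⁿ and any input sequence ū(0),…,ū(T−1), let X̄_T ∈ ℝ^{nT} and Ȳ_T ∈ ℝ^{pT} denote the stacked state trajectory (x(1),…,x(T)) and output trajectory (y(0),…,y(T−1)) of the system from x(0) = x̄₀ with this input. Then there exist vectors α and β such that x̄₀ = X0·K_U·α, Ū_T = U·K0·β (Ū_T the stacked input), X̄_T = X·K_U·α + X·K0·β, and Ȳ_T = Y·K_U·α + Y·K0·β. -/
/-- any state and output trajectory of the system can be written
as a linear combination of the experimental data (free response from X·K_U,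
forced response from X·K0). -/
theorem stmt_6
    (n m p N T : ℕ) (hT : n ≤ T)
    (A : Matrix (Fin n) (Fin n) ℝ) (B : Matrix (Fin n) (Fin m) ℝ)
    (C : Matrix (Fin p) (Fin n) ℝ)
    -- data generated by N experiments of horizon T
    (x : Fin N → ℕ → Fin n → ℝ) (u : Fin N → ℕ → Fin m → ℝ)
    (hdyn : ∀ i t, x i (t + 1) = A.mulVec (x i t) + B.mulVec (u i t))
    (X0 : Matrix (Fin n) (Fin N) ℝ) (hX0 : ∀ j i, X0 j i = x i 0 j)
    (U : Matrix (Fin T × Fin m) (Fin N) ℝ)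
    (hU : ∀ (t : Fin T) (j : Fin m) (i : Fin N), U (t, j) i = u i t.val j)
    (X : Matrix (Fin T × Fin n) (Fin N) ℝ)
    (hX : ∀ (t : Fin T) (j : Fin n) (i : Fin N), X (t, j) i = x i (t.val + 1) j)
    (Y : Matrix (Fin T × Fin p) (Fin N) ℝ)
    (hY : ∀ (t : Fin T) (j : Fin p) (i : Fin N), Y (t, j) i = C.mulVec (x i t.val) j)
    -- persistency of excitation
    (hpe : (Matrix.fromRows X0 U).rank = n + m * T)
    -- K_U and K0: matrices whose columns form bases of Ker U and Ker X0
    (kU k0 : ℕ)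
    (KU : Matrix (Fin N) (Fin kU) ℝ)
    (hKUrange : LinearMap.range KU.mulVecLin = LinearMap.ker U.mulVecLin)
    (hKUinj : Function.Injective KU.mulVecLin)
    (K0 : Matrix (Fin N) (Fin k0) ℝ)
    (hK0range : LinearMap.range K0.mulVecLin = LinearMap.ker X0.mulVecLin)
    (hK0inj : Function.Injective K0.mulVecLin)
    -- an arbitrary trajectory of the system
    (xbar : ℕ → Fin n → ℝ) (ubar : ℕ → Fin m → ℝ)
    (hbar : ∀ t, xbar (t + 1) = A.mulVec (xbar t) + B.mulVec (ubar t)) :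
    ∃ (α : Fin kU → ℝ) (β : Fin k0 → ℝ),
      -- x̄₀ = X0·K_U·α
      xbar 0 = (X0 * KU).mulVec α ∧
      -- Ū_T = U·K0·β
      (fun tj : Fin T × Fin m => ubar tj.1.val tj.2) = (U * K0).mulVec β ∧
      -- X̄_T = X·K_U·α + X·K0·β
      (fun tj : Fin T × Fin n => xbar (tj.1.val + 1) tj.2)
        = (X * KU).mulVec α + (X * K0).mulVec β ∧
      -- Ȳ_T = Y·K_U·α + Y·K0·β
      (fun tj : Fin T × Fin p => C.mulVec (xbar tj.1.val) tj.2)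
        = (Y * KU).mulVec α + (Y * K0).mulVec β := by
  have hsurj : Function.Surjective (Matrix.fromRows X0 U).mulVecLin := by
    rw [← LinearMap.range_eq_top]
    apply Submodule.eq_top_of_finrank_eq
    have h : Module.finrank ℝ (LinearMap.range (Matrix.fromRows X0 U).mulVecLin) = n + m * T := hpe
    rw [h]
    simp [mul_comm]
  obtain ⟨g1, hg1⟩ := hsurj (Sum.elim (xbar 0) 0)
  obtain ⟨g2, hg2⟩ := hsurj (Sum.elim 0 (fun tj : Fin T × Fin m => ubar tj.1.val tj.2))
  rw [Matrix.mulVecLin_apply, Matrix.fromRows_mulVec] at hg1 hg2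
  have h1X : X0.mulVec g1 = xbar 0 := by
    funext i; simpa using congrFun hg1 (Sum.inl i)
  have h1U : U.mulVec g1 = 0 := by
    funext i; simpa using congrFun hg1 (Sum.inr i)
  have h2X : X0.mulVec g2 = 0 := by
    funext i; simpa using congrFun hg2 (Sum.inl i)
  have h2U : U.mulVec g2 = fun tj : Fin T × Fin m => ubar tj.1.val tj.2 := by
    funext i; simpa using congrFun hg2 (Sum.inr i)
  have k1 : g1 ∈ LinearMap.range KU.mulVecLin := by
    rw [hKUrange]; exact h1U
  have k2 : g2 ∈ LinearMap.range K0.mulVecLin := by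
    rw [hK0range]; exact h2X
  obtain ⟨α, hα⟩ := k1
  obtain ⟨β, hβ⟩ := k2
  rw [Matrix.mulVecLin_apply] at hα hβ
  have hgX : X0.mulVec (g1 + g2) = xbar 0 := by rw [Matrix.mulVec_add, h1X, h2X, add_zero]
  have hgU : U.mulVec (g1 + g2) = fun tj : Fin T × Fin m => ubar tj.1.val tj.2 := by
    rw [Matrix.mulVec_add, h1U, h2U, zero_add]
  have key : ∀ t, t ≤ T → xbar t = ∑ i, (g1 + g2) i • x i t := by
    intro t
    induction t with
    | zero =>
      intro _
      rw [← hgX]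
      funext j
      simp [Matrix.mulVec, dotProduct, hX0, Finset.sum_apply, mul_comm]
    | succ t ih =>
      intro ht
      have hu : ubar t = ∑ i, (g1 + g2) i • u i t := by
        funext j
        have := congrFun hgU (⟨t, ht⟩, j)
        simp only at this
        rw [← this]
        simp [Matrix.mulVec, dotProduct, hU, Finset.sum_apply, mul_comm]
      rw [hbar, ih (by omega), hu, Matrix.mulVec_sum, Matrix.mulVec_sum, ← Finset.sum_add_distrib]
      refine Finset.sum_congr rfl fun i _ => ?_
      rw [hdyn, smul_add, Matrix.mulVec_smul, Matrix.mulVec_smul]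
  refine ⟨α, β, ?_, ?_, ?_, ?_⟩
  · rw [← Matrix.mulVec_mulVec, hα, h1X]
  · rw [← Matrix.mulVec_mulVec, hβ, h2U]
  · rw [← Matrix.mulVec_mulVec, ← Matrix.mulVec_mulVec, hα, hβ, ← Matrix.mulVec_add]
    funext ⟨t, j⟩
    simp only
    rw [key _ t.2]
    simp only [Matrix.mulVec, dotProduct, hX, Finset.sum_apply, Pi.smul_apply, smul_eq_mul, mul_comm]
  · rw [← Matrix.mulVec_mulVec, ← Matrix.mulVec_mulVec, hα, hβ, ← Matrix.mulVec_add]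
    funext ⟨t, j⟩
    simp only
    rw [key _ t.2.le, Matrix.mulVec_sum]
    simp only [Matrix.mulVec_smul, Finset.sum_apply, Pi.smul_apply, smul_eq_mul]
    rw [Matrix.mulVec, dotProduct]
    refine Finset.sum_congr rfl fun i _ => ?_
    rw [hY, mul_comm]
end

section
/- For any x₀ ∈ ℝⁿ and any finite horizon T ≥ n, the following are equivalent: (i) x₀ ∈ V*; (ii) there exists an input sequence u(0),…,u(T−1) such that the trajectory of the system with x(0) = x₀ satisfies y(t) = C x(t) = 0 for all t ∈ {0,…,T−1}. -/
/-- The invariant subspace algorithm: states whose first `k` outputs can be zeroed. -/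
def isaSeq {n m p : ℕ} (A : Matrix (Fin n) (Fin n) ℝ) (B : Matrix (Fin n) (Fin m) ℝ)
    (C : Matrix (Fin p) (Fin n) ℝ) : ℕ → Submodule ℝ (Fin n → ℝ)
  | 0 => ⊤
  | k + 1 => LinearMap.ker C.mulVecLin ⊓
      (isaSeq A B C k ⊔ LinearMap.range B.mulVecLin).comap A.mulVecLin

theorem isaSeq_succ_le {n m p : ℕ} (A : Matrix (Fin n) (Fin n) ℝ) (B : Matrix (Fin n) (Fin m) ℝ)
    (C : Matrix (Fin p) (Fin n) ℝ) (k : ℕ) : isaSeq A B C (k + 1) ≤ isaSeq A B C k := by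
  induction k with
  | zero => exact le_top
  | succ k ih =>
    exact inf_le_inf le_rfl (Submodule.comap_mono (sup_le_sup ih le_rfl))

theorem isaSeq_stab {n m p : ℕ} (A : Matrix (Fin n) (Fin n) ℝ) (B : Matrix (Fin n) (Fin m) ℝ)
    (C : Matrix (Fin p) (Fin n) ℝ) : ∃ k ≤ n, isaSeq A B C (k + 1) = isaSeq A B C k := by
  by_contra! h
  have key : ∀ j ≤ n + 1, Module.finrank ℝ (isaSeq A B C j) + j ≤ n := by
    intro j
    induction j with
    | zero =>
      intro _
      simpa using Submodule.finrank_le (isaSeq A B C 0)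
    | succ j ih =>
      intro hj
      have h1 := ih (by omega)
      have h2 := Submodule.finrank_lt_finrank_of_lt
        (lt_of_le_of_ne (isaSeq_succ_le A B C j) (h j (by omega)))
      omega
  have := key (n + 1) le_rfl
  omega

/-- x₀ ∈ V* iff the output can be kept identically zero over any
finite horizon T ≥ n by a suitable input sequence. -/
theorem stmt_7
    (n m p T : ℕ) (hT : n ≤ T)
    (A : Matrix (Fin n) (Fin n) ℝ) (B : Matrix (Fin n) (Fin m) ℝ)
    (C : Matrix (Fin p) (Fin n) ℝ)
    -- V* : largest (A, Im B)-controlled invariant subspace contained in Ker C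
    (Vstar : Submodule ℝ (Fin n → ℝ))
    (hVinv : ∀ v ∈ Vstar, A.mulVec v ∈ Vstar ⊔ LinearMap.range B.mulVecLin)
    (hVker : Vstar ≤ LinearMap.ker C.mulVecLin)
    (hVmax : ∀ W : Submodule ℝ (Fin n → ℝ),
      (∀ v ∈ W, A.mulVec v ∈ W ⊔ LinearMap.range B.mulVecLin) →
      W ≤ LinearMap.ker C.mulVecLin → W ≤ Vstar)
    (x0 : Fin n → ℝ) :
    x0 ∈ Vstar ↔
      ∃ (x : ℕ → Fin n → ℝ) (u : ℕ → Fin m → ℝ),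
        x 0 = x0 ∧
        (∀ t, x (t + 1) = A.mulVec (x t) + B.mulVec (u t)) ∧
        ∀ t < T, C.mulVec (x t) = 0 := by
  constructor
  · intro hx
    have h : ∀ v, ∃ w, v ∈ Vstar → A.mulVec v + B.mulVec w ∈ Vstar := by
      intro v
      by_cases hv : v ∈ Vstar
      · obtain ⟨a, ha, b, ⟨w, rfl⟩, hab⟩ := Submodule.mem_sup.1 (hVinv v hv)
        refine ⟨-w, fun _ => ?_⟩
        rw [← hab, Matrix.mulVec_neg, Matrix.mulVecLin_apply]
        simpa using ha
      · exact ⟨0, fun h => absurd h hv⟩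
    choose f hf using h
    let x : ℕ → Fin n → ℝ := fun t =>
      Nat.rec x0 (fun _ v => A.mulVec v + B.mulVec (f v)) t
    have hxV : ∀ t, x t ∈ Vstar := by
      intro t
      induction t with
      | zero => exact hx
      | succ t ih => exact hf _ ih
    refine ⟨x, fun t => f (x t), rfl, fun t => rfl, fun t _ => ?_⟩
    simpa using hVker (hxV t)
  · rintro ⟨x, u, rfl, hstep, hC⟩
    have hmem : ∀ k j, k + j ≤ T → x j ∈ isaSeq A B C k := by
      intro k
      induction k with
      | zero => intro j _; exact Submodule.mem_top
      | succ k ih =>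
        intro j hj
        refine ⟨by simpa using hC j (by omega), ?_⟩
        refine Submodule.mem_sup.2 ⟨x (j + 1), ih (j + 1) (by omega),
          B.mulVecLin (-(u j)), ⟨_, rfl⟩, ?_⟩
        rw [hstep, Matrix.mulVecLin_apply, Matrix.mulVecLin_apply, Matrix.mulVec_neg]
        simp
    obtain ⟨k, hk, hst⟩ := isaSeq_stab A B C
    refine hVmax (isaSeq A B C k) ?_ ?_ (hmem k 0 (by omega))
    · intro v hv
      rw [← hst] at hv
      exact hv.2
    · rw [← hst]
      exact inf_le_left
end

section
/- For any ξ ∈ ℝⁿ and any finite horizon T ≥ n, the following are equivalent: (i) ξ ∈ S*; (ii) there exists an input sequence u(0),…,u(T−1) such that the trajectory of the system with x(0) = 0 satisfies y(t) = C x(t) = 0 for all t ∈ {0,…,T−1} and x(T) = ξ. -/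
/-- one step of the subspace recursion -/
def stepF {n m p : ℕ} (A : Matrix (Fin n) (Fin n) ℝ) (B : Matrix (Fin n) (Fin m) ℝ)
    (C : Matrix (Fin p) (Fin n) ℝ) (W : Submodule ℝ (Fin n → ℝ)) : Submodule ℝ (Fin n → ℝ) :=
  (W ⊓ LinearMap.ker C.mulVecLin).map A.mulVecLin ⊔ LinearMap.range B.mulVecLin

/-- the subspace recursion -/
def seqS {n m p : ℕ} (A : Matrix (Fin n) (Fin n) ℝ) (B : Matrix (Fin n) (Fin m) ℝ)
    (C : Matrix (Fin p) (Fin n) ℝ) : ℕ → Submodule ℝ (Fin n → ℝ)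
  | 0 => ⊥
  | k + 1 => stepF A B C (seqS A B C k)

/-- trajectory from zero -/
def traj {n m : ℕ} (A : Matrix (Fin n) (Fin n) ℝ) (B : Matrix (Fin n) (Fin m) ℝ)
    (u : ℕ → Fin m → ℝ) : ℕ → Fin n → ℝ
  | 0 => 0
  | k + 1 => A.mulVec (traj A B u k) + B.mulVec (u k)

theorem traj_congr {n m : ℕ} (A : Matrix (Fin n) (Fin n) ℝ) (B : Matrix (Fin n) (Fin m) ℝ)
    (u v : ℕ → Fin m → ℝ) (k : ℕ) (h : ∀ t < k, u t = v t) :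
    traj A B u k = traj A B v k := by
  induction k with
  | zero => rfl
  | succ k ih =>
    simp only [traj]
    rw [ih (fun t ht => h t (by omega)), h k (by omega)]

theorem stepF_mono {n m p : ℕ} (A : Matrix (Fin n) (Fin n) ℝ) (B : Matrix (Fin n) (Fin m) ℝ)
    (C : Matrix (Fin p) (Fin n) ℝ) {V W : Submodule ℝ (Fin n → ℝ)} (h : V ≤ W) :
    stepF A B C V ≤ stepF A B C W :=
  sup_le_sup_right (Submodule.map_mono (inf_le_inf_right _ h)) _

theorem seqS_le_succ {n m p : ℕ} (A : Matrix (Fin n) (Fin n) ℝ) (B : Matrix (Fin n) (Fin m) ℝ)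
    (C : Matrix (Fin p) (Fin n) ℝ) (k : ℕ) : seqS A B C k ≤ seqS A B C (k + 1) := by
  induction k with
  | zero => exact bot_le
  | succ k ih => exact stepF_mono A B C ih

theorem seqS_stab {n m p : ℕ} (A : Matrix (Fin n) (Fin n) ℝ) (B : Matrix (Fin n) (Fin m) ℝ)
    (C : Matrix (Fin p) (Fin n) ℝ) (k : ℕ) :
    seqS A B C k = seqS A B C (k + 1) ∨ k ≤ Module.finrank ℝ (seqS A B C k) := by
  induction k with
  | zero => exact Or.inr (Nat.zero_le _)
  | succ k ih =>
    rcases ih with h | h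
    · left
      exact congrArg (stepF A B C) h
    · rcases (seqS_le_succ A B C k).eq_or_lt with h' | h'
      · left
        exact congrArg (stepF A B C) h'
      · right
        have := Submodule.finrank_lt_finrank_of_lt h'
        omega

theorem seqS_fix {n m p : ℕ} (A : Matrix (Fin n) (Fin n) ℝ) (B : Matrix (Fin n) (Fin m) ℝ)
    (C : Matrix (Fin p) (Fin n) ℝ) (k : ℕ) (hk : n ≤ k) :
    seqS A B C (k + 1) = seqS A B C k := by
  rcases seqS_stab A B C k with h | h
  · exact h.symm
  · have h2 := Submodule.finrank_le (seqS A B C k)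
    have h3 : Module.finrank ℝ (Fin n → ℝ) = n := by simp
    have h4 : seqS A B C k = ⊤ := Submodule.eq_top_of_finrank_eq (by omega)
    apply le_antisymm
    · rw [h4]; exact le_top
    · exact seqS_le_succ A B C k

theorem seqS_reach {n m p : ℕ} (A : Matrix (Fin n) (Fin n) ℝ) (B : Matrix (Fin n) (Fin m) ℝ)
    (C : Matrix (Fin p) (Fin n) ℝ) (k : ℕ) :
    ∀ ξ ∈ seqS A B C k, ∃ u : ℕ → Fin m → ℝ,
      (∀ t < k, C.mulVec (traj A B u t) = 0) ∧ traj A B u k = ξ := by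
  induction k with
  | zero =>
    intro ξ hξ
    refine ⟨fun _ => 0, by simp, ?_⟩
    exact ((Submodule.mem_bot ℝ).1 hξ).symm
  | succ k ih =>
    intro ξ hξ
    obtain ⟨a, ha, b, hb, rfl⟩ := Submodule.mem_sup.1 hξ
    obtain ⟨v, hv, rfl⟩ := Submodule.mem_map.1 ha
    obtain ⟨w, rfl⟩ := hb
    obtain ⟨u, hu, huv⟩ := ih v hv.1
    have hc : ∀ t ≤ k, traj A B (Function.update u k w) t = traj A B u t := by
      intro t ht
      apply traj_congr
      intro s hs
      exact Function.update_of_ne (by omega) _ _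
    refine ⟨Function.update u k w, ?_, ?_⟩
    · intro t ht
      rw [hc t (by omega)]
      rcases Nat.lt_succ_iff_lt_or_eq.1 ht with h | h
      · exact hu t h
      · rw [h, huv]
        exact hv.2
    · simp only [traj]
      rw [hc k le_rfl, huv, Function.update_self]
      rfl

/-- ξ ∈ S* iff ξ is reachable in T ≥ n steps from x(0) = 0 with an
input keeping the output identically zero on {0,…,T−1}. -/
theorem stmt_8
    (n m p T : ℕ) (hT : n ≤ T)
    (A : Matrix (Fin n) (Fin n) ℝ) (B : Matrix (Fin n) (Fin m) ℝ)
    (C : Matrix (Fin p) (Fin n) ℝ)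
    -- S* : smallest (A, Ker C)-conditioned invariant subspace containing Im B
    (Sstar : Submodule ℝ (Fin n → ℝ))
    (hSinv : ∀ v ∈ Sstar ⊓ LinearMap.ker C.mulVecLin, A.mulVec v ∈ Sstar)
    (hSim : LinearMap.range B.mulVecLin ≤ Sstar)
    (hSmin : ∀ W : Submodule ℝ (Fin n → ℝ),
      (∀ v ∈ W ⊓ LinearMap.ker C.mulVecLin, A.mulVec v ∈ W) →
      LinearMap.range B.mulVecLin ≤ W → Sstar ≤ W)
    (ξ : Fin n → ℝ) :
    ξ ∈ Sstar ↔
      ∃ (x : ℕ → Fin n → ℝ) (u : ℕ → Fin m → ℝ),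
        x 0 = 0 ∧
        (∀ t, x (t + 1) = A.mulVec (x t) + B.mulVec (u t)) ∧
        (∀ t < T, C.mulVec (x t) = 0) ∧
        x T = ξ := by
  constructor
  · intro hξ
    have hle : Sstar ≤ seqS A B C T := by
      apply hSmin
      · intro v hv
        rw [← seqS_fix A B C T hT]
        exact Submodule.mem_sup_left (Submodule.mem_map.2 ⟨v, hv, rfl⟩)
      · rw [← seqS_fix A B C T hT]
        exact le_sup_right
    obtain ⟨u, hu, hx⟩ := seqS_reach A B C T ξ (hle hξ)
    exact ⟨traj A B u, u, rfl, fun _ => rfl, hu, hx⟩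
  · rintro ⟨x, u, h0, hs, hC, rfl⟩
    have key : ∀ t ≤ T, x t ∈ Sstar := by
      intro t
      induction t with
      | zero => intro _; rw [h0]; exact Sstar.zero_mem
      | succ t ih =>
        intro ht
        rw [hs t]
        exact Sstar.add_mem (hSinv _ ⟨ih (by omega), hC t (by omega)⟩) (hSim ⟨u t, rfl⟩)
    exact key T le_rfl
end

section
/- Under persistency of excitation, i.e., rank [X0; U] = n + mT, the matrix X0·K_U has full row rank n and the matrix U·K0 has full row rank mT, where K_U and K0 are matrices whose columns form bases of Ker U and Ker X0, respectively. -/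
/-- under persistency of excitation (rank [X0; U] = n + mT),
X0·K_U has full row rank n and U·K0 has full row rank mT. -/
theorem stmt_9
    (n m T N kU k0 : ℕ)
    (X0 : Matrix (Fin n) (Fin N) ℝ)
    (U : Matrix (Fin T × Fin m) (Fin N) ℝ)
    -- K_U and K0: matrices whose columns form bases of Ker U and Ker X0
    (KU : Matrix (Fin N) (Fin kU) ℝ)
    (hKUrange : LinearMap.range KU.mulVecLin = LinearMap.ker U.mulVecLin)
    (hKUinj : Function.Injective KU.mulVecLin)
    (K0 : Matrix (Fin N) (Fin k0) ℝ)
    (hK0range : LinearMap.range K0.mulVecLin = LinearMap.ker X0.mulVecLin)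
    (hK0inj : Function.Injective K0.mulVecLin)
    -- persistency of excitation
    (hpe : (Matrix.fromRows X0 U).rank = n + m * T) :
    (X0 * KU).rank = n ∧ (U * K0).rank = m * T := by
  have hsurj : LinearMap.range (Matrix.fromRows X0 U).mulVecLin = ⊤ := by
    apply Submodule.eq_top_of_finrank_eq
    have h : Module.finrank ℝ (LinearMap.range (Matrix.fromRows X0 U).mulVecLin)
        = n + m * T := hpe
    rw [h]
    simp [mul_comm]
  have key : ∀ (y : Fin n → ℝ) (z : Fin T × Fin m → ℝ),
      ∃ x, X0.mulVec x = y ∧ U.mulVec x = z := by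
    intro y z
    obtain ⟨x, hx⟩ := LinearMap.range_eq_top.1 hsurj (Sum.elim y z)
    rw [Matrix.mulVecLin_apply, Matrix.fromRows_mulVec] at hx
    refine ⟨x, ?_, ?_⟩
    · funext i
      exact congrFun hx (Sum.inl i)
    · funext i
      exact congrFun hx (Sum.inr i)
  constructor
  · have h : LinearMap.range (X0 * KU).mulVecLin = ⊤ := by
      rw [LinearMap.range_eq_top]
      intro y
      obtain ⟨x, hx, hz⟩ := key y 0
      have hm : x ∈ LinearMap.range KU.mulVecLin := by
        rw [hKUrange]
        exact hz
      obtain ⟨w, rfl⟩ := hm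
      refine ⟨w, ?_⟩
      simpa [Matrix.mulVec_mulVec] using hx
    rw [Matrix.rank, h]
    simp
  · have h : LinearMap.range (U * K0).mulVecLin = ⊤ := by
      rw [LinearMap.range_eq_top]
      intro y
      obtain ⟨x, hz, hx⟩ := key 0 y
      have hm : x ∈ LinearMap.range K0.mulVecLin := by
        rw [hK0range]
        exact hz
      obtain ⟨w, rfl⟩ := hm
      refine ⟨w, ?_⟩
      simpa [Matrix.mulVec_mulVec] using hx
    rw [Matrix.rank, h]
    simp [mul_comm]
end

section
/- Define the sequence of subspaces V₀ = Ker C and V_i = A^{−1}(V_{i−1} + Im B) ∩ Ker C for i ≥ 1, where A^{−1}(W) denotes the preimage of W under A. Then the sequence is nonincreasing (V_{i+1} ⊆ V_i for all i), each V_i contains V*, and V_i = V* for every i ≥ n. -/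
/-- the recursion V₀ = Ker C, V_i = A⁻¹(V_{i−1} + Im B) ∩ Ker C is
nonincreasing, each term contains V*, and it converges to V* in at most n steps. -/
theorem stmt_10
    (n m p : ℕ)
    (A : Matrix (Fin n) (Fin n) ℝ) (B : Matrix (Fin n) (Fin m) ℝ)
    (C : Matrix (Fin p) (Fin n) ℝ)
    -- V* : largest (A, Im B)-controlled invariant subspace contained in Ker C
    (Vstar : Submodule ℝ (Fin n → ℝ))
    (hVinv : ∀ v ∈ Vstar, A.mulVec v ∈ Vstar ⊔ LinearMap.range B.mulVecLin)
    (hVker : Vstar ≤ LinearMap.ker C.mulVecLin)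
    (hVmax : ∀ W : Submodule ℝ (Fin n → ℝ),
      (∀ v ∈ W, A.mulVec v ∈ W ⊔ LinearMap.range B.mulVecLin) →
      W ≤ LinearMap.ker C.mulVecLin → W ≤ Vstar)
    -- the recursive sequence of subspaces
    (Vseq : ℕ → Submodule ℝ (Fin n → ℝ))
    (hV0 : Vseq 0 = LinearMap.ker C.mulVecLin)
    (hVsucc : ∀ i, Vseq (i + 1) =
      Submodule.comap A.mulVecLin (Vseq i ⊔ LinearMap.range B.mulVecLin) ⊓
        LinearMap.ker C.mulVecLin) :
    (∀ i, Vseq (i + 1) ≤ Vseq i) ∧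
    (∀ i, Vstar ≤ Vseq i) ∧
    (∀ i, n ≤ i → Vseq i = Vstar) := by
  have hker : ∀ i, Vseq i ≤ LinearMap.ker C.mulVecLin := by
    intro i
    cases i with
    | zero => exact hV0.le
    | succ k => rw [hVsucc]; exact inf_le_right
  have hdec : ∀ i, Vseq (i + 1) ≤ Vseq i := by
    intro i
    induction i with
    | zero => rw [hV0]; exact hker _
    | succ k ih =>
      refine (hVsucc (k + 1)).le.trans (le_trans ?_ (hVsucc k).ge)
      exact inf_le_inf_right _ (Submodule.comap_mono (sup_le_sup_right ih _))
  have hst : ∀ i, Vstar ≤ Vseq i := by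
    intro i
    induction i with
    | zero => rw [hV0]; exact hVker
    | succ k ih =>
      rw [hVsucc k]
      refine le_inf (fun v hv => ?_) hVker
      exact sup_le_sup_right ih _ (hVinv v hv)
  have key : ∀ i, Vseq i ≤ Vstar ∨ Module.finrank ℝ (Vseq i) + i ≤ n := by
    intro i
    induction i with
    | zero =>
      right
      simpa using Submodule.finrank_le (Vseq 0)
    | succ k ih =>
      rcases ih with h | h
      · exact Or.inl ((hdec k).trans h)
      · by_cases he : Vseq (k + 1) = Vseq k
        · left
          rw [he]
          refine hVmax _ (fun v hv => ?_) (hker k)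
          rw [← he, hVsucc k] at hv
          exact hv.1
        · right
          have := Submodule.finrank_lt_finrank_of_lt (lt_of_le_of_ne (hdec k) he)
          omega
  refine ⟨hdec, hst, fun i hi => le_antisymm ?_ (hst i)⟩
  refine (antitone_nat_of_succ_le hdec hi).trans ?_
  rcases key n with h | h
  · exact h
  · have h0 : Module.finrank ℝ (Vseq n) = 0 := by omega
    rw [Submodule.finrank_eq_zero.mp h0]
    exact bot_le
end

section
/- Define the sequence of subspaces S₁ = Im B and S_i = A(S_{i−1} ∩ Ker C) + Im B for i ≥ 2. Then the sequence is nondecreasing (S_i ⊆ S_{i+1} for all i), each S_i is contained in S*, and S_i = S* for every i ≥ n. -/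
/-- the recursion S₁ = Im B, S_i = A(S_{i−1} ∩ Ker C) + Im B is
nondecreasing, each term is contained in S*, and it converges to S* in at most
n steps. -/
theorem stmt_11
    (n m p : ℕ)
    (A : Matrix (Fin n) (Fin n) ℝ) (B : Matrix (Fin n) (Fin m) ℝ)
    (C : Matrix (Fin p) (Fin n) ℝ)
    -- S* : smallest (A, Ker C)-conditioned invariant subspace containing Im B
    (Sstar : Submodule ℝ (Fin n → ℝ))
    (hSinv : ∀ v ∈ Sstar ⊓ LinearMap.ker C.mulVecLin, A.mulVec v ∈ Sstar)
    (hSim : LinearMap.range B.mulVecLin ≤ Sstar)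
    (hSmin : ∀ W : Submodule ℝ (Fin n → ℝ),
      (∀ v ∈ W ⊓ LinearMap.ker C.mulVecLin, A.mulVec v ∈ W) →
      LinearMap.range B.mulVecLin ≤ W → Sstar ≤ W)
    -- the recursive sequence of subspaces (defined for i ≥ 1)
    (Sseq : ℕ → Submodule ℝ (Fin n → ℝ))
    (hS1 : Sseq 1 = LinearMap.range B.mulVecLin)
    (hSsucc : ∀ i, 1 ≤ i → Sseq (i + 1) =
      Submodule.map A.mulVecLin (Sseq i ⊓ LinearMap.ker C.mulVecLin) ⊔
        LinearMap.range B.mulVecLin) :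
    (∀ i, 1 ≤ i → Sseq i ≤ Sseq (i + 1)) ∧
    (∀ i, 1 ≤ i → Sseq i ≤ Sstar) ∧
    (∀ i, 1 ≤ i → n ≤ i → Sseq i = Sstar) := by
  have hmono : ∀ i, 1 ≤ i → Sseq i ≤ Sseq (i + 1) := by
    intro i hi
    induction i, hi using Nat.le_induction with
    | base => rw [hSsucc 1 le_rfl, hS1]; exact le_sup_right
    | succ k hk ih =>
      rw [hSsucc (k + 1) (by omega)]
      conv_lhs => rw [hSsucc k hk]
      exact sup_le_sup_right (Submodule.map_mono (inf_le_inf_right _ ih)) _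
  have hle : ∀ i, 1 ≤ i → Sseq i ≤ Sstar := by
    intro i hi
    induction i, hi using Nat.le_induction with
    | base => rw [hS1]; exact hSim
    | succ k hk ih =>
      rw [hSsucc k hk]
      refine sup_le ?_ hSim
      rintro _ ⟨v, hv, rfl⟩
      exact hSinv v ⟨ih hv.1, hv.2⟩
  have hB : ∀ i, 1 ≤ i → LinearMap.range B.mulVecLin ≤ Sseq i := by
    intro i hi
    induction i, hi using Nat.le_induction with
    | base => rw [hS1]
    | succ k hk ih => exact ih.trans (hmono k hk)
  have hfix : ∀ i, 1 ≤ i → Sseq (i + 1) ≤ Sseq i → Sstar ≤ Sseq i := by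
    intro i hi h
    refine hSmin _ (fun v hv => h ?_) (hB i hi)
    rw [hSsucc i hi]
    exact Submodule.mem_sup_left ⟨v, hv, rfl⟩
  have key : ∀ i, 1 ≤ i → Sstar ≤ Sseq i ∨ i ≤ Module.finrank ℝ (Sseq i) := by
    intro i hi
    induction i, hi using Nat.le_induction with
    | base =>
      by_cases h : Module.finrank ℝ (Sseq 1) = 0
      · left
        have h0 : Sseq 1 = ⊥ := Submodule.finrank_eq_zero.mp h
        apply hfix 1 le_rfl
        rw [hSsucc 1 le_rfl, ← hS1, h0]
        simp
      · right; omega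
    | succ k hk ih =>
      by_cases h : Sstar ≤ Sseq k
      · exact Or.inl (h.trans (hmono k hk))
      · right
        have h1 := ih.resolve_left h
        have hlt : Sseq k < Sseq (k + 1) :=
          lt_of_le_not_ge (hmono k hk) (fun h2 => h (hfix k hk h2))
        have := Submodule.finrank_lt_finrank_of_lt hlt
        omega
  refine ⟨hmono, hle, fun i hi hn => le_antisymm (hle i hi) ?_⟩
  rcases key i hi with h | h
  · exact h
  · have : Sseq i = ⊤ := by
      apply Submodule.eq_top_of_finrank_eq
      apply le_antisymm (Submodule.finrank_le _)
      simp only [Module.finrank_fin_fun]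
      omega
    rw [this]
    exact le_top
end

section
/- Assume T ≥ n and persistency of excitation, and let R be a matrix whose columns form a basis of R* = V* ∩ S*. If a vector v satisfies X·K0·v ∈ Im(I_T ⊗ R) (where I_T ⊗ R is the block-diagonal matrix with T diagonal copies of R), then X·K0·v is the stacked state trajectory (x(1),…,x(T)) of the system with initial state x(0) = 0 and stacked input U·K0·v, and this trajectory satisfies x(t) ∈ R* for all t ∈ {1,…,T}. -/
/-- if X·K0·v ∈ Im(I_T ⊗ R), where the columns of R form a basis
of R* = V* ∩ S*, then X·K0·v is the stacked state trajectory of the system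
starting at the origin with stacked input U·K0·v, and this trajectory evolves
inside R*. -/
theorem stmt_15
    (n m p N T : ℕ) (hT : n ≤ T)
    (A : Matrix (Fin n) (Fin n) ℝ) (B : Matrix (Fin n) (Fin m) ℝ)
    (C : Matrix (Fin p) (Fin n) ℝ)
    -- V* : largest (A, Im B)-controlled invariant subspace contained in Ker C
    (Vstar : Submodule ℝ (Fin n → ℝ))
    (hVinv : ∀ v ∈ Vstar, A.mulVec v ∈ Vstar ⊔ LinearMap.range B.mulVecLin)
    (hVker : Vstar ≤ LinearMap.ker C.mulVecLin)
    (hVmax : ∀ W : Submodule ℝ (Fin n → ℝ),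
      (∀ v ∈ W, A.mulVec v ∈ W ⊔ LinearMap.range B.mulVecLin) →
      W ≤ LinearMap.ker C.mulVecLin → W ≤ Vstar)
    -- S* : smallest (A, Ker C)-conditioned invariant subspace containing Im B
    (Sstar : Submodule ℝ (Fin n → ℝ))
    (hSinv : ∀ v ∈ Sstar ⊓ LinearMap.ker C.mulVecLin, A.mulVec v ∈ Sstar)
    (hSim : LinearMap.range B.mulVecLin ≤ Sstar)
    (hSmin : ∀ W : Submodule ℝ (Fin n → ℝ),
      (∀ v ∈ W ⊓ LinearMap.ker C.mulVecLin, A.mulVec v ∈ W) →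
      LinearMap.range B.mulVecLin ≤ W → Sstar ≤ W)
    -- data generated by N experiments of horizon T
    (x : Fin N → ℕ → Fin n → ℝ) (u : Fin N → ℕ → Fin m → ℝ)
    (hdyn : ∀ i t, x i (t + 1) = A.mulVec (x i t) + B.mulVec (u i t))
    (X0 : Matrix (Fin n) (Fin N) ℝ) (hX0 : ∀ j i, X0 j i = x i 0 j)
    (U : Matrix (Fin T × Fin m) (Fin N) ℝ)
    (hU : ∀ (t : Fin T) (j : Fin m) (i : Fin N), U (t, j) i = u i t.val j)
    (X : Matrix (Fin T × Fin n) (Fin N) ℝ)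
    (hX : ∀ (t : Fin T) (j : Fin n) (i : Fin N), X (t, j) i = x i (t.val + 1) j)
    -- persistency of excitation
    (hpe : (Matrix.fromRows X0 U).rank = n + m * T)
    -- K0: matrix whose columns form a basis of Ker X0
    (k0 : ℕ)
    (K0 : Matrix (Fin N) (Fin k0) ℝ)
    (hK0range : LinearMap.range K0.mulVecLin = LinearMap.ker X0.mulVecLin)
    (hK0inj : Function.Injective K0.mulVecLin)
    -- R: matrix whose columns form a basis of R* = V* ∩ S*
    (q : ℕ) (R : Matrix (Fin n) (Fin q) ℝ)
    (hRrange : LinearMap.range R.mulVecLin = Vstar ⊓ Sstar)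
    (hRinj : Function.Injective R.mulVecLin)
    -- the vector v with X·K0·v ∈ Im(I_T ⊗ R)
    (v : Fin k0 → ℝ)
    (hv : (X * K0).mulVec v ∈
      LinearMap.range (Matrix.kroneckerMap (· * ·)
        (1 : Matrix (Fin T) (Fin T) ℝ) R).mulVecLin) :
    ∃ (xbar : ℕ → Fin n → ℝ) (ubar : ℕ → Fin m → ℝ),
      -- it starts at the origin,
      xbar 0 = 0 ∧
      -- it is a trajectory of the system,
      (∀ t, xbar (t + 1) = A.mulVec (xbar t) + B.mulVec (ubar t)) ∧
      -- with stacked input U·K0·v,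
      (∀ tj : Fin T × Fin m, ubar tj.1.val tj.2 = (U * K0).mulVec v tj) ∧
      -- its stacked state trajectory (x(1),…,x(T)) is X·K0·v,
      (∀ tj : Fin T × Fin n, xbar (tj.1.val + 1) tj.2 = (X * K0).mulVec v tj) ∧
      -- and it satisfies x(t) ∈ R* for all t ∈ {1,…,T}
      (∀ t, 1 ≤ t → t ≤ T → xbar t ∈ Vstar ⊓ Sstar) := by
  have hw : X0.mulVec (K0.mulVec v) = 0 := by
    have h : K0.mulVecLin v ∈ LinearMap.ker X0.mulVecLin := by
      rw [← hK0range]; exact ⟨v, rfl⟩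
    simpa using h
  obtain ⟨z, hz⟩ := hv
  have hXs : ∀ tj : Fin T × Fin n,
      (∑ i, (K0.mulVec v) i • x i (tj.1.val + 1)) tj.2 = (X * K0).mulVec v tj := by
    rintro ⟨t, j⟩
    rw [← Matrix.mulVec_mulVec]
    simp only [Matrix.mulVec, dotProduct, Finset.sum_apply, Pi.smul_apply, smul_eq_mul, hX]
    exact Finset.sum_congr rfl fun i _ => mul_comm _ _
  refine ⟨fun t => ∑ i, (K0.mulVec v) i • x i t, fun t => ∑ i, (K0.mulVec v) i • u i t,
    ?_, ?_, ?_, hXs, ?_⟩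
  · ext j
    have h := congrFun hw j
    rw [← h]
    conv_rhs => rw [Matrix.mulVec, dotProduct]
    simp only [Finset.sum_apply, Pi.smul_apply, smul_eq_mul, hX0]
    exact Finset.sum_congr rfl fun i _ => mul_comm _ _
  · intro t
    simp only [hdyn, Matrix.mulVec_sum, Matrix.mulVec_smul, smul_add, Finset.sum_add_distrib]
  · rintro ⟨t, j⟩
    rw [← Matrix.mulVec_mulVec]
    simp only [Matrix.mulVec, dotProduct, Finset.sum_apply, Pi.smul_apply, smul_eq_mul, hU]
    exact Finset.sum_congr rfl fun i _ => mul_comm _ _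
  · intro t h1 h2
    obtain ⟨s, rfl⟩ : ∃ s, t = s + 1 := ⟨t - 1, by omega⟩
    rw [← hRrange]
    refine ⟨fun k => z (⟨s, by omega⟩, k), ?_⟩
    ext j
    have h := hXs (⟨s, by omega⟩, j)
    rw [← hz] at h
    refine Eq.trans ?_ h.symm
    simp [Matrix.mulVec, dotProduct, Fintype.sum_prod_type, Matrix.one_apply]
end

section
/- Assume T ≥ n and persistency of excitation, let R be a matrix whose columns form a basis of R* = V* ∩ S*, and let v satisfy X·K0·v ∈ Im(I_T ⊗ R). Then the attack input A_T = U·K0·v is undetectable over the horizon T: for every initial state x(0) and every nominal stacked input Ū_T, the output trajectory (y(0),…,y(T−1)) of the system driven by Ū_T + A_T equals the output trajectory driven by Ū_T alone. -/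
/-- undetectability of the data-driven attack A_T = U·K0·v when
X·K0·v ∈ Im(I_T ⊗ R), with R a basis matrix of R* = V* ∩ S*: for every initial
state and every nominal input, the output under the attacked input Ū_T + A_T
coincides with the nominal output over the horizon T. -/
theorem stmt_16
    (n m p N T : ℕ) (hT : n ≤ T)
    (A : Matrix (Fin n) (Fin n) ℝ) (B : Matrix (Fin n) (Fin m) ℝ)
    (C : Matrix (Fin p) (Fin n) ℝ)
    -- V* : largest (A, Im B)-controlled invariant subspace contained in Ker C
    (Vstar : Submodule ℝ (Fin n → ℝ))
    (hVinv : ∀ v ∈ Vstar, A.mulVec v ∈ Vstar ⊔ LinearMap.range B.mulVecLin)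
    (hVker : Vstar ≤ LinearMap.ker C.mulVecLin)
    (hVmax : ∀ W : Submodule ℝ (Fin n → ℝ),
      (∀ v ∈ W, A.mulVec v ∈ W ⊔ LinearMap.range B.mulVecLin) →
      W ≤ LinearMap.ker C.mulVecLin → W ≤ Vstar)
    -- S* : smallest (A, Ker C)-conditioned invariant subspace containing Im B
    (Sstar : Submodule ℝ (Fin n → ℝ))
    (hSinv : ∀ v ∈ Sstar ⊓ LinearMap.ker C.mulVecLin, A.mulVec v ∈ Sstar)
    (hSim : LinearMap.range B.mulVecLin ≤ Sstar)
    (hSmin : ∀ W : Submodule ℝ (Fin n → ℝ),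
      (∀ v ∈ W ⊓ LinearMap.ker C.mulVecLin, A.mulVec v ∈ W) →
      LinearMap.range B.mulVecLin ≤ W → Sstar ≤ W)
    -- data generated by N experiments of horizon T
    (x : Fin N → ℕ → Fin n → ℝ) (u : Fin N → ℕ → Fin m → ℝ)
    (hdyn : ∀ i t, x i (t + 1) = A.mulVec (x i t) + B.mulVec (u i t))
    (X0 : Matrix (Fin n) (Fin N) ℝ) (hX0 : ∀ j i, X0 j i = x i 0 j)
    (U : Matrix (Fin T × Fin m) (Fin N) ℝ)
    (hU : ∀ (t : Fin T) (j : Fin m) (i : Fin N), U (t, j) i = u i t.val j)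
    (X : Matrix (Fin T × Fin n) (Fin N) ℝ)
    (hX : ∀ (t : Fin T) (j : Fin n) (i : Fin N), X (t, j) i = x i (t.val + 1) j)
    -- persistency of excitation
    (hpe : (Matrix.fromRows X0 U).rank = n + m * T)
    -- K0: matrix whose columns form a basis of Ker X0
    (k0 : ℕ)
    (K0 : Matrix (Fin N) (Fin k0) ℝ)
    (hK0range : LinearMap.range K0.mulVecLin = LinearMap.ker X0.mulVecLin)
    (hK0inj : Function.Injective K0.mulVecLin)
    -- R: matrix whose columns form a basis of R* = V* ∩ S*
    (q : ℕ) (R : Matrix (Fin n) (Fin q) ℝ)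
    (hRrange : LinearMap.range R.mulVecLin = Vstar ⊓ Sstar)
    (hRinj : Function.Injective R.mulVecLin)
    -- the vector v with X·K0·v ∈ Im(I_T ⊗ R)
    (v : Fin k0 → ℝ)
    (hv : (X * K0).mulVec v ∈
      LinearMap.range (Matrix.kroneckerMap (· * ·)
        (1 : Matrix (Fin T) (Fin T) ℝ) R).mulVecLin)
    -- the attack input A_T = U·K0·v, unstacked over the horizon
    (atk : ℕ → Fin m → ℝ)
    (hatk : ∀ tj : Fin T × Fin m, atk tj.1.val tj.2 = (U * K0).mulVec v tj) :
    -- for every initial state and nominal input, the attacked output equals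
    -- the nominal output on {0,…,T−1}
    ∀ (xinit : Fin n → ℝ) (ubar : ℕ → Fin m → ℝ)
      (xnom xatk : ℕ → Fin n → ℝ),
      xnom 0 = xinit → xatk 0 = xinit →
      (∀ t, xnom (t + 1) = A.mulVec (xnom t) + B.mulVec (ubar t)) →
      (∀ t, xatk (t + 1) = A.mulVec (xatk t) + B.mulVec (ubar t + atk t)) →
      ∀ t < T, C.mulVec (xatk t) = C.mulVec (xnom t) := by
  intro xinit ubar xnom xatk h0 h0' hn ha
  set w : Fin N → ℝ := K0.mulVec v with hw
  have hw0 : X0.mulVec w = 0 := by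
    have : w ∈ LinearMap.ker X0.mulVecLin := by
      rw [← hK0range]
      exact ⟨v, rfl⟩
    simpa using this
  have hatk' : ∀ t < T, atk t = ∑ i, w i • u i t := by
    intro t ht
    ext j
    have h := hatk (⟨t, ht⟩, j)
    rw [← Matrix.mulVec_mulVec, ← hw] at h
    simp only at h
    rw [h]
    simp [Matrix.mulVec, dotProduct, hU, Finset.sum_apply, mul_comm]
  have hd : ∀ t ≤ T, xatk t = xnom t + ∑ i, w i • x i t := by
    intro t
    induction t with
    | zero =>
      intro _
      have : ∑ i, w i • x i 0 = 0 := by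
        rw [← hw0]
        ext j
        simp [Matrix.mulVec, dotProduct, hX0, Finset.sum_apply, mul_comm]
      rw [h0, h0', this, add_zero]
    | succ t ih =>
      intro ht
      have hz : ∑ i, w i • x i (t + 1)
          = A.mulVec (∑ i, w i • x i t) + B.mulVec (∑ i, w i • u i t) := by
        simp only [← Matrix.mulVecLin_apply, map_sum, map_smul]
        rw [← Finset.sum_add_distrib]
        refine Finset.sum_congr rfl fun i _ => ?_
        rw [hdyn, smul_add]
        rfl
      rw [ha, hn, ih (by omega), hatk' t (by omega), hz, Matrix.mulVec_add, Matrix.mulVec_add]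
      abel
  intro t ht
  rw [hd t ht.le, Matrix.mulVec_add]
  suffices h : C.mulVec (∑ i, w i • x i t) = 0 by rw [h, add_zero]
  cases t with
  | zero =>
    have : ∑ i, w i • x i 0 = 0 := by
      rw [← hw0]
      ext j
      simp [Matrix.mulVec, dotProduct, hX0, Finset.sum_apply, mul_comm]
    rw [this, Matrix.mulVec_zero]
  | succ t =>
    obtain ⟨y, hy⟩ := hv
    have hmem : ∑ i, w i • x i (t + 1) ∈ LinearMap.range R.mulVecLin := by
      refine ⟨fun k => y (⟨t, by omega⟩, k), ?_⟩
      ext j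
      have h := congrFun hy (⟨t, by omega⟩, j)
      rw [← Matrix.mulVec_mulVec, ← hw] at h
      have e : (X.mulVec w) (⟨t, by omega⟩, j) = (∑ i, w i • x i (t + 1)) j := by
        simp [Matrix.mulVec, dotProduct, hX, Finset.sum_apply, mul_comm]
      rw [← e, ← h]
      simp [Matrix.mulVec, dotProduct, Fintype.sum_prod_type, Matrix.one_apply, ite_mul]
    rw [hRrange] at hmem
    exact LinearMap.mem_ker.mp (hVker hmem.1)
end

section
/- A subspace V ⊆ ℝⁿ is (A, Im B)-controlled invariant, i.e., A V ⊆ V + Im B, if and only if there exists a feedback gain F ∈ ℝ^{m×n} such that (A + B·F)·V ⊆ V. -/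
/-- a subspace V is (A, Im B)-controlled invariant iff there is a
feedback gain F with (A + B·F)·V ⊆ V. -/
theorem stmt_17
    (n m : ℕ)
    (A : Matrix (Fin n) (Fin n) ℝ) (B : Matrix (Fin n) (Fin m) ℝ)
    (V : Submodule ℝ (Fin n → ℝ)) :
    (∀ v ∈ V, A.mulVec v ∈ V ⊔ LinearMap.range B.mulVecLin) ↔
      ∃ F : Matrix (Fin m) (Fin n) ℝ, ∀ v ∈ V, (A + B * F).mulVec v ∈ V := by
  constructor
  · intro h
    let b := Module.Basis.ofVectorSpace ℝ V
    have hu : ∀ i, ∃ u : Fin m → ℝ, A.mulVec (b i : Fin n → ℝ) + B.mulVec u ∈ V := by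
      intro i
      obtain ⟨y, hy, z, ⟨w, rfl⟩, hyz⟩ := Submodule.mem_sup.1 (h (b i) (b i).2)
      refine ⟨-w, ?_⟩
      rw [← hyz, Matrix.mulVec_neg, Matrix.mulVecLin_apply, add_neg_cancel_right]
      exact hy
    choose u hu using hu
    obtain ⟨g, hg⟩ := LinearMap.exists_extend (b.constr ℝ u)
    refine ⟨LinearMap.toMatrix' g, fun v hv => ?_⟩
    have key : V.mkQ ∘ₗ (A.mulVecLin + B.mulVecLin ∘ₗ g) ∘ₗ V.subtype = 0 := by
      refine b.ext fun i => ?_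
      have hgi : g (b i : Fin n → ℝ) = u i := by
        have := LinearMap.congr_fun hg (b i)
        rw [Module.Basis.constr_basis] at this
        exact this
      simp only [LinearMap.comp_apply, LinearMap.add_apply, Submodule.subtype_apply,
        LinearMap.zero_apply, Matrix.mulVecLin_apply, hgi, Submodule.mkQ_apply]
      exact (Submodule.Quotient.mk_eq_zero V).2 (hu i)
    have h2 := LinearMap.congr_fun key ⟨v, hv⟩
    have h3 : A.mulVec v + B.mulVec (g v) ∈ V := (Submodule.Quotient.mk_eq_zero V).1 h2
    rw [Matrix.add_mulVec, ← Matrix.mulVec_mulVec, LinearMap.toMatrix'_mulVec]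
    exact h3
  · rintro ⟨F, hF⟩ v hv
    have h1 := hF v hv
    rw [Matrix.add_mulVec, ← Matrix.mulVec_mulVec] at h1
    refine Submodule.mem_sup.2 ⟨_, h1, B.mulVec (-(F.mulVec v)), ⟨_, rfl⟩, ?_⟩
    rw [Matrix.mulVec_neg, add_neg_cancel_right]
end
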